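/- arXiv:2310.07838 — 11 statements merged into one kernel-verified Lean document; each statement's English description precedes it below -/
import Mathlib

section
/- There is a universal constant c > 0 with the following property. Let S and A be nonempty finite sets with |A| ≥ 2, and let n be a positive integer with n ≥ |S||A|/4. For every (possibly randomized) estimator π̂ that maps a dataset D ∈ (S×A)^n to a conditional distribution in Δ(A|S), there exist ρ ∈ Δ(S) and π* ∈ Δ(A|S) such that, when D consists of n i.i.d. samples from ρ×π*, the expected risk satisfies E[ TV(π̂(D) ‖ π* | ρ) ] ≥ c·√(|S||A|/n). -/
open Finset MeasureTheory

/-- `p` is a probability distribution on the finite set `A`. -/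
def IsDist {A : Type} [Fintype A] (p : A → ℝ) : Prop :=
  (∀ a, 0 ≤ p a) ∧ ∑ a, p a = 1

/-- `π` is a conditional probability distribution in `Δ(A|S)`. -/
def IsCondDist {S A : Type} [Fintype A] (π : S → A → ℝ) : Prop :=
  ∀ s, IsDist (π s)

/-- Conditional total variation `TV(π ‖ π' | ρ)`. -/
noncomputable def condTV {S A : Type} [Fintype S] [Fintype A]
    (ρ : S → ℝ) (π π' : S → A → ℝ) : ℝ :=
  ∑ s, ρ s * ((1 / 2) * ∑ a, |π s a - π' s a|)

/-- Probability of the dataset `D` under `n` i.i.d. samples from `ρ × π`. -/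
noncomputable def wt {S A : Type} {n : ℕ} (ρ : S → ℝ) (π : S → A → ℝ) (D : Fin n → S × A) : ℝ :=
  ∏ i, ρ (D i).1 * π (D i).1 (D i).2


lemma aff_bound {D : Type} [Fintype D] (P Q : D → ℝ) (hP : ∀ d, 0 ≤ P d) (hQ : ∀ d, 0 ≤ Q d)
    (sP : ∑ d, P d = 1) (sQ : ∑ d, Q d = 1) :
    (∑ d, Real.sqrt (P d * Q d)) ^ 2 / 2 ≤ ∑ d, min (P d) (Q d) := by
  have hmin : ∀ d, 0 ≤ min (P d) (Q d) := fun d => le_min (hP d) (hQ d)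
  have hmax : ∀ d, 0 ≤ max (P d) (Q d) := fun d => le_max_of_le_left (hP d)
  have h1 : ∑ d, Real.sqrt (P d * Q d)
      = ∑ d, Real.sqrt (min (P d) (Q d)) * Real.sqrt (max (P d) (Q d)) := by
    refine Finset.sum_congr rfl fun d _ => ?_
    rw [← Real.sqrt_mul (hmin d), min_mul_max]
  have h2 := Finset.sum_mul_sq_le_sq_mul_sq Finset.univ
    (fun d => Real.sqrt (min (P d) (Q d))) (fun d => Real.sqrt (max (P d) (Q d)))
  simp only [Real.sq_sqrt (hmin _), Real.sq_sqrt (hmax _)] at h2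
  have h3 : ∑ d, max (P d) (Q d) ≤ 2 := by
    calc ∑ d, max (P d) (Q d) ≤ ∑ d, (P d + Q d) := by
          refine Finset.sum_le_sum fun d _ => max_le ?_ ?_
          · linarith [hQ d]
          · linarith [hP d]
      _ = 2 := by rw [Finset.sum_add_distrib, sP, sQ]; norm_num
  have h4 : 0 ≤ ∑ d, min (P d) (Q d) := Finset.sum_nonneg fun d _ => hmin d
  rw [h1]
  nlinarith

/-- the sign attached to a bit -/
noncomputable def sg (b : Bool) : ℝ := if b then 1 else -1

/-- The weight of the label (j,b) in the hypothesis θ. -/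
noncomputable def hw (m : ℕ) (δ : ℝ) (t b : Bool) : ℝ := (1 + δ * sg (xor t b)) / (2 * m)

lemma hw_nonneg (m : ℕ) (δ : ℝ) (h0 : 0 ≤ δ) (h1 : δ ≤ 1) (t b : Bool) : 0 ≤ hw m δ t b := by
  unfold hw sg
  apply div_nonneg _ (by positivity)
  split_ifs <;> linarith

lemma hw_sum (m : ℕ) (hm : 0 < m) (δ : ℝ) (t : Bool) : ∑ b, hw m δ t b = 1 / m := by
  have : (m : ℝ) ≠ 0 := by positivity
  unfold hw sg
  cases t <;> simp <;> field_simp <;> ring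

lemma hw_diff (m : ℕ) (hm : 0 < m) (δ : ℝ) (h0 : 0 ≤ δ) (t b : Bool) :
    |hw m δ t b - hw m δ (!t) b| = δ / m := by
  have hm' : (0 : ℝ) < m := by positivity
  have h : hw m δ t b - hw m δ (!t) b = δ / m ∨ hw m δ t b - hw m δ (!t) b = -(δ / m) := by
    unfold hw sg
    cases t <;> cases b <;> simp
    · right; field_simp; ring
    · left; field_simp; ring
    · left; field_simp; ring
    · right; field_simp; ring
  have h2 : 0 ≤ δ / m := by positivity
  rcases h with h | h <;> rw [h]
  · exact abs_of_nonneg h2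
  · rw [abs_neg, abs_of_nonneg h2]

lemma hw_sqrt (m : ℕ) (hm : 0 < m) (δ : ℝ) (h0 : 0 ≤ δ) (h1 : δ ≤ 1) (t b : Bool) :
    (1 - δ ^ 2) / (2 * m) ≤ Real.sqrt (hw m δ t b * hw m δ (!t) b) := by
  have hm' : (0 : ℝ) < m := by positivity
  have h : hw m δ t b * hw m δ (!t) b = (1 - δ ^ 2) / (2 * m) ^ 2 := by
    unfold hw sg
    cases t <;> cases b <;> simp <;> field_simp <;> ring
  apply Real.le_sqrt_of_sq_le
  rw [h, div_pow]
  have : 0 ≤ δ ^ 2 := by positivity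
  have : δ ^ 2 ≤ 1 := by nlinarith
  gcongr
  nlinarith

lemma hw_sqrt_sum (m : ℕ) (hm : 0 < m) (δ : ℝ) (h0 : 0 ≤ δ) (h1 : δ ≤ 1) (t : Bool) :
    1 / m - δ ^ 2 / m ≤ ∑ b, Real.sqrt (hw m δ t b * hw m δ (!t) b) := by
  have hm' : (0 : ℝ) < m := by positivity
  have := Finset.sum_le_sum (fun b (_ : b ∈ (Finset.univ : Finset Bool)) => hw_sqrt m hm δ h0 h1 t b)
  refine le_trans (le_of_eq ?_) this
  simp
  field_simp

/-- The hypothesis policy. -/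
noncomputable def hpi {S A : Type} {m : ℕ} (δ : ℝ) (e : Fin m × Bool → A)
    (θ : S × Fin m → Bool) (s : S) : A → ℝ :=
  Function.extend e (fun x => hw m δ (θ (s, x.1)) x.2) 0

lemma hpi_apply {S A : Type} {m : ℕ} (δ : ℝ) (e : Fin m × Bool → A) (he : Function.Injective e)
    (θ : S × Fin m → Bool) (s : S) (x : Fin m × Bool) :
    hpi δ e θ s (e x) = hw m δ (θ (s, x.1)) x.2 := he.extend_apply _ _ _

lemma hpi_off {S A : Type} {m : ℕ} (δ : ℝ) (e : Fin m × Bool → A)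
    (θ : S × Fin m → Bool) (s : S) (a : A) (ha : a ∉ Set.range e) :
    hpi δ e θ s a = 0 := by
  unfold hpi
  rw [Function.extend_apply']
  · rfl
  · exact ha

lemma hpi_dist {S A : Type} [Fintype A] {m : ℕ} (hm : 0 < m) (δ : ℝ) (h0 : 0 ≤ δ) (h1 : δ ≤ 1)
    (e : Fin m × Bool → A) (he : Function.Injective e)
    (θ : S × Fin m → Bool) : IsCondDist (hpi δ e θ) := by
  intro s
  constructor
  · intro a
    by_cases ha : a ∈ Set.range e
    · obtain ⟨x, rfl⟩ := ha
      rw [hpi_apply δ e he]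
      exact hw_nonneg m δ h0 h1 _ _
    · rw [hpi_off δ e θ s a ha]
  · rw [← Fintype.sum_of_injective e he (fun x => hw m δ (θ (s, x.1)) x.2) _
      (fun a ha => hpi_off δ e θ s a ha) (fun x => (hpi_apply δ e he θ s x).symm),
      Fintype.sum_prod_type]
    simp only [hw_sum m hm]
    have : (m : ℝ) ≠ 0 := by positivity
    simp [this]

open Classical in
/-- flip one coordinate -/
noncomputable def flipAt {I : Type} (x : I) (θ : I → Bool) : I → Bool :=
  Function.update θ x (!θ x)

lemma flipAt_invol {I : Type} (x : I) : Function.Involutive (flipAt x) := by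
  classical
  intro θ
  unfold flipAt
  simp

lemma flipAt_same {I : Type} (x : I) (θ : I → Bool) : flipAt x θ x = !θ x := by
  simp [flipAt]

lemma flipAt_ne {I : Type} (x y : I) (h : y ≠ x) (θ : I → Bool) : flipAt x θ y = θ y := by
  simp [flipAt, h]

lemma bc_bound {S A : Type} [Fintype S] [Fintype A] [Nonempty S] {m : ℕ} (hm : 0 < m) (δ : ℝ)
    (h0 : 0 ≤ δ) (h1 : δ ≤ 1)
    (e : Fin m × Bool → A) (he : Function.Injective e) (θ : S × Fin m → Bool) (x : S × Fin m) :
    1 - δ ^ 2 / (Fintype.card S * m) ≤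
      ∑ z : S × A, Real.sqrt (((Fintype.card S : ℝ)⁻¹ * hpi δ e θ z.1 z.2) *
        ((Fintype.card S : ℝ)⁻¹ * hpi δ e (flipAt x θ) z.1 z.2)) := by
  classical
  have hm' : (0 : ℝ) < m := by positivity
  have hk : (0 : ℝ) < Fintype.card S := by
    exact_mod_cast Fintype.card_pos
  have e1 : ∀ z : S × A, Real.sqrt (((Fintype.card S : ℝ)⁻¹ * hpi δ e θ z.1 z.2) *
        ((Fintype.card S : ℝ)⁻¹ * hpi δ e (flipAt x θ) z.1 z.2))
      = (Fintype.card S : ℝ)⁻¹ * Real.sqrt (hpi δ e θ z.1 z.2 * hpi δ e (flipAt x θ) z.1 z.2) := by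
    intro z
    rw [mul_mul_mul_comm, Real.sqrt_mul (by positivity), Real.sqrt_mul_self (by positivity)]
  simp only [e1]
  rw [← Finset.mul_sum, Fintype.sum_prod_type]
  have e2 : ∀ s : S, ∑ a, Real.sqrt (hpi δ e θ s a * hpi δ e (flipAt x θ) s a)
      = ∑ j, ∑ b, Real.sqrt (hw m δ (θ (s, j)) b * hw m δ (flipAt x θ (s, j)) b) := by
    intro s
    rw [← Fintype.sum_prod_type' (f := fun j b =>
      Real.sqrt (hw m δ (θ (s, j)) b * hw m δ (flipAt x θ (s, j)) b))]
    symm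
    apply Fintype.sum_of_injective e he
    · intro a ha
      rw [hpi_off δ e θ s a ha]; simp
    · intro y
      rw [hpi_apply δ e he, hpi_apply δ e he]
  simp only [e2]
  rw [← Fintype.sum_prod_type' (f := fun s j =>
    ∑ b, Real.sqrt (hw m δ (θ (s, j)) b * hw m δ (flipAt x θ (s, j)) b))]
  have e3 : ∀ y : S × Fin m, 1 / (m : ℝ) - (if y = x then δ ^ 2 / m else 0) ≤
      ∑ b, Real.sqrt (hw m δ (θ (y.1, y.2)) b * hw m δ (flipAt x θ (y.1, y.2)) b) := by
    intro y
    by_cases hy : y = x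
    · subst hy
      simp only [if_true, Prod.mk.eta, flipAt_same]
      exact hw_sqrt_sum m hm δ h0 h1 _
    · simp only [hy, if_false, Prod.mk.eta, flipAt_ne x y hy]
      simp only [Real.sqrt_mul_self (hw_nonneg m δ h0 h1 _ _), hw_sum m hm]
      simp
  have e4 := Finset.sum_le_sum (fun y (_ : y ∈ (Finset.univ : Finset (S × Fin m))) => e3 y)
  have e5 := mul_le_mul_of_nonneg_left e4 (inv_nonneg.2 hk.le)
  refine le_trans (le_of_eq ?_) e5
  rw [Finset.sum_sub_distrib]
  simp
  field_simp

lemma wt_nonneg {S A : Type} {n : ℕ} (ρ : S → ℝ) (π : S → A → ℝ)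
    (hρ : ∀ s, 0 ≤ ρ s) (hπ : ∀ s a, 0 ≤ π s a) (D : Fin n → S × A) : 0 ≤ wt ρ π D :=
  Finset.prod_nonneg fun _ _ => mul_nonneg (hρ _) (hπ _ _)

lemma wt_sum {S A : Type} [Fintype S] [Fintype A] {n : ℕ} (ρ : S → ℝ) (π : S → A → ℝ)
    (hρ : IsDist ρ) (hπ : IsCondDist π) : ∑ D : Fin n → S × A, wt ρ π D = 1 := by
  classical
  unfold wt
  rw [← Fintype.sum_pow (fun z : S × A => ρ z.1 * π z.1 z.2) n, Fintype.sum_prod_type]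
  simp only [← Finset.mul_sum, (hπ _).2, mul_one, hρ.2, one_pow]

lemma wt_bc {S A : Type} [Fintype S] [Fintype A] {n : ℕ} (ρ : S → ℝ) (π π' : S → A → ℝ)
    (hρ : ∀ s, 0 ≤ ρ s) (hπ : ∀ s a, 0 ≤ π s a) (hπ' : ∀ s a, 0 ≤ π' s a) :
    ∑ D : Fin n → S × A, Real.sqrt (wt ρ π D * wt ρ π' D)
      = (∑ z : S × A, Real.sqrt ((ρ z.1 * π z.1 z.2) * (ρ z.1 * π' z.1 z.2))) ^ n := by
  classical
  rw [Fintype.sum_pow]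
  refine Finset.sum_congr rfl fun D _ => ?_
  unfold wt
  rw [← Finset.prod_mul_distrib, Real.sqrt_prod]
  intro i _
  exact mul_nonneg (mul_nonneg (hρ _) (hπ _ _)) (mul_nonneg (hρ _) (hπ' _ _))

lemma unif_dist {S : Type} [Fintype S] [Nonempty S] :
    IsDist (fun _ : S => (Fintype.card S : ℝ)⁻¹) := by
  have hk : (0 : ℝ) < Fintype.card S := by exact_mod_cast Fintype.card_pos
  refine ⟨fun _ => by positivity, ?_⟩
  simp

lemma affinity {S A : Type} [Fintype S] [Fintype A] [Nonempty S] {m : ℕ} (hm : 0 < m) (δ : ℝ)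
    (h0 : 0 ≤ δ) (h1 : δ ≤ 1) (n : ℕ) (hn : δ ^ 2 * (4 * n) = Fintype.card S * m)
    (e : Fin m × Bool → A) (he : Function.Injective e) (θ : S × Fin m → Bool) (x : S × Fin m) :
    1 / 4 ≤ ∑ D : Fin n → S × A,
      min (wt (fun _ => (Fintype.card S : ℝ)⁻¹) (hpi δ e θ) D)
        (wt (fun _ => (Fintype.card S : ℝ)⁻¹) (hpi δ e (flipAt x θ)) D) := by
  have hm' : (1 : ℝ) ≤ m := by exact_mod_cast hm
  have hk : (1 : ℝ) ≤ Fintype.card S := by exact_mod_cast Fintype.card_pos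
  have d1 := hpi_dist (S := S) hm δ h0 h1 e he θ
  have d2 := hpi_dist (S := S) hm δ h0 h1 e he (flipAt x θ)
  have u := unif_dist (S := S)
  have a1 := aff_bound (D := Fin n → S × A) _ _
    (wt_nonneg _ _ u.1 fun s a => (d1 s).1 a) (wt_nonneg _ _ u.1 fun s a => (d2 s).1 a)
    (wt_sum _ _ u d1) (wt_sum _ _ u d2)
  refine le_trans ?_ a1
  rw [wt_bc _ _ _ u.1 (fun s a => (d1 s).1 a) (fun s a => (d2 s).1 a)]
  have b := bc_bound (S := S) hm δ h0 h1 e he θ x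
  have hd : δ ^ 2 ≤ 1 := by nlinarith
  have hkm : (1 : ℝ) ≤ Fintype.card S * m := by nlinarith
  have hle : δ ^ 2 / (Fintype.card S * m) ≤ 1 := by
    rw [div_le_one (by linarith)]; linarith
  have c1 := pow_le_pow_left₀ (by linarith) b (n * 2)
  have c2 := one_add_mul_le_pow (a := -(δ ^ 2 / (Fintype.card S * m))) (by linarith) (n * 2)
  have c3 : ((n * 2 : ℕ) : ℝ) * -(δ ^ 2 / (Fintype.card S * m)) = - (1 / 2) := by
    push_cast
    field_simp
    linarith
  rw [c3] at c2
  rw [← sub_eq_add_neg, ← sub_eq_add_neg] at c2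
  rw [← pow_mul]
  linarith

lemma coord {S A : Type} [Fintype S] [DecidableEq S] [Fintype A] [Nonempty S] {m : ℕ} (hm : 0 < m) (δ : ℝ)
    (h0 : 0 ≤ δ) (h1 : δ ≤ 1) (n : ℕ) (hn : δ ^ 2 * (4 * n) = Fintype.card S * m)
    (e : Fin m × Bool → A) (he : Function.Injective e)
    (G : (Fin n → S × A) → S → A → ℝ → ℝ) (hG0 : ∀ D s a p, 0 ≤ G D s a p)
    (hG : ∀ D s a p q, |p - q| ≤ G D s a p + G D s a q) (s : S) (y : Fin m × Bool) :
    Fintype.card (S × Fin m → Bool) * (δ / (8 * m)) ≤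
      ∑ θ : S × Fin m → Bool, ∑ D : Fin n → S × A,
        wt (fun _ => (Fintype.card S : ℝ)⁻¹) (hpi δ e θ) D * G D s (e y) (hpi δ e θ s (e y)) := by
  set F : (S × Fin m → Bool) → ℝ := fun θ => ∑ D : Fin n → S × A,
        wt (fun _ => (Fintype.card S : ℝ)⁻¹) (hpi δ e θ) D * G D s (e y) (hpi δ e θ s (e y)) with hF
  have u := unif_dist (S := S)
  have hsym : ∑ θ, F (flipAt (s, y.1) θ) = ∑ θ, F θ :=
    Equiv.sum_comp (flipAt_invol (s, y.1)).toPerm F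
  have hpt : ∀ θ, δ / (4 * m) ≤ F θ + F (flipAt (s, y.1) θ) := by
    intro θ
    have d1 := hpi_dist (S := S) hm δ h0 h1 e he θ
    have d2 := hpi_dist (S := S) hm δ h0 h1 e he (flipAt (s, y.1) θ)
    have haff := affinity hm δ h0 h1 n hn e he θ (s, y.1)
    have hdm : 0 ≤ δ / m := by positivity
    have := mul_le_mul_of_nonneg_right haff hdm
    have e0 : δ / (4 * m) = 1 / 4 * (δ / m) := by ring
    rw [e0]
    refine this.trans ?_
    rw [Finset.sum_mul, hF]
    simp only
    rw [← Finset.sum_add_distrib]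
    refine Finset.sum_le_sum fun D _ => ?_
    have hd := hG D s (e y) (hpi δ e θ s (e y)) (hpi δ e (flipAt (s, y.1) θ) s (e y))
    have hdd : |hpi δ e θ s (e y) - hpi δ e (flipAt (s, y.1) θ) s (e y)| = δ / m := by
      rw [hpi_apply δ e he, hpi_apply δ e he, flipAt_same, hw_diff m hm δ h0]
    rw [hdd] at hd
    have w1 := wt_nonneg (fun _ => (Fintype.card S : ℝ)⁻¹) (hpi δ e θ) u.1
      (fun s a => (d1 s).1 a) D
    have w2 := wt_nonneg (fun _ => (Fintype.card S : ℝ)⁻¹) (hpi δ e (flipAt (s, y.1) θ)) u.1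
      (fun s a => (d2 s).1 a) D
    refine (mul_le_mul_of_nonneg_left hd (le_min w1 w2)).trans ?_
    rw [mul_add]
    exact add_le_add (mul_le_mul_of_nonneg_right (min_le_left _ _) (hG0 _ _ _ _))
      (mul_le_mul_of_nonneg_right (min_le_right _ _) (hG0 _ _ _ _))
  have hs := Finset.sum_le_sum (fun θ (_ : θ ∈ (Finset.univ : Finset (S × Fin m → Bool))) => hpt θ)
  rw [Finset.sum_add_distrib, hsym, Finset.sum_const, Finset.card_univ, nsmul_eq_mul] at hs
  have e0 : δ / (4 * m) = 2 * (δ / (8 * m)) := by ring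
  rw [e0] at hs
  linarith

lemma assouad {S A : Type} [Fintype S] [Fintype A] [Nonempty S] {m : ℕ} (hm : 0 < m) (δ : ℝ)
    (h0 : 0 ≤ δ) (h1 : δ ≤ 1) (n : ℕ) (hn : δ ^ 2 * (4 * n) = Fintype.card S * m)
    (e : Fin m × Bool → A) (he : Function.Injective e)
    (G : (Fin n → S × A) → S → A → ℝ → ℝ) (hG0 : ∀ D s a p, 0 ≤ G D s a p)
    (hG : ∀ D s a p q, |p - q| ≤ G D s a p + G D s a q) :
    ∃ θ : S × Fin m → Bool, δ / 8 ≤ ∑ D : Fin n → S × A,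
        wt (fun _ => (Fintype.card S : ℝ)⁻¹) (hpi δ e θ) D *
          ∑ s, (Fintype.card S : ℝ)⁻¹ * ((1 / 2) * ∑ a, G D s a (hpi δ e θ s a)) := by
  classical
  have hm' : (0 : ℝ) < m := by positivity
  have hk : (0 : ℝ) < Fintype.card S := by exact_mod_cast Fintype.card_pos
  have u := unif_dist (S := S)
  suffices h : ∑ θ : S × Fin m → Bool, δ / 8 ≤ ∑ θ : S × Fin m → Bool, ∑ D : Fin n → S × A,
        wt (fun _ => (Fintype.card S : ℝ)⁻¹) (hpi δ e θ) D *
          ∑ s, (Fintype.card S : ℝ)⁻¹ * ((1 / 2) * ∑ a, G D s a (hpi δ e θ s a)) by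
    obtain ⟨θ, _, hθ⟩ := Finset.exists_le_of_sum_le Finset.univ_nonempty h
    exact ⟨θ, hθ⟩
  have step : ∀ θ : S × Fin m → Bool,
      ∑ s : S, ∑ y : Fin m × Bool, (Fintype.card S : ℝ)⁻¹ * (1 / 2) * ∑ D : Fin n → S × A,
        wt (fun _ => (Fintype.card S : ℝ)⁻¹) (hpi δ e θ) D * G D s (e y) (hpi δ e θ s (e y))
      ≤ ∑ D : Fin n → S × A,
        wt (fun _ => (Fintype.card S : ℝ)⁻¹) (hpi δ e θ) D *
          ∑ s, (Fintype.card S : ℝ)⁻¹ * ((1 / 2) * ∑ a, G D s a (hpi δ e θ s a)) := by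
    intro θ
    have d1 := hpi_dist (S := S) hm δ h0 h1 e he θ
    simp only [Finset.mul_sum]
    have : ∀ s : S, ∑ y : Fin m × Bool, ∑ D : Fin n → S × A, (Fintype.card S : ℝ)⁻¹ * (1 / 2) * 
        (wt (fun _ => (Fintype.card S : ℝ)⁻¹) (hpi δ e θ) D * G D s (e y) (hpi δ e θ s (e y)))
        = ∑ D : Fin n → S × A, ∑ y : Fin m × Bool, (Fintype.card S : ℝ)⁻¹ * (1 / 2) * 
        (wt (fun _ => (Fintype.card S : ℝ)⁻¹) (hpi δ e θ) D * G D s (e y) (hpi δ e θ s (e y))) :=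
      fun s => Finset.sum_comm
    simp only [this]
    rw [Finset.sum_comm]
    refine Finset.sum_le_sum fun D _ => Finset.sum_le_sum fun s _ => ?_
    have w1 := wt_nonneg (fun _ => (Fintype.card S : ℝ)⁻¹) (hpi δ e θ) u.1
      (fun s a => (d1 s).1 a) D
    set f : A → ℝ := fun a => wt (fun _ => (Fintype.card S : ℝ)⁻¹) (hpi δ e θ) D *
      ((Fintype.card S : ℝ)⁻¹ * (1 / 2 * G D s a (hpi δ e θ s a))) with hf
    have hf0 : ∀ a, 0 ≤ f a := fun a => by
      have := hG0 D s a (hpi δ e θ s a)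
      simp only [hf]
      positivity
    calc _ = ∑ y, f (e y) := Finset.sum_congr rfl fun y _ => by simp only [hf]; ring
      _ = ∑ a ∈ Finset.univ.image e, f a := by
        rw [Finset.sum_image fun x _ y _ h => he h]
      _ ≤ ∑ a, f a := Finset.sum_le_sum_of_subset_of_nonneg (Finset.subset_univ _)
        fun a _ _ => hf0 a
  refine le_trans ?_ (Finset.sum_le_sum fun θ _ => step θ)
  rw [Finset.sum_comm]
  have h2 : ∀ s : S, ∑ y : Fin m × Bool, (Fintype.card S : ℝ)⁻¹ * (1 / 2) *
      (Fintype.card (S × Fin m → Bool) * (δ / (8 * m))) ≤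
      ∑ θ : S × Fin m → Bool, ∑ y : Fin m × Bool,
      (Fintype.card S : ℝ)⁻¹ * (1 / 2) * ∑ D : Fin n → S × A,
        wt (fun _ => (Fintype.card S : ℝ)⁻¹) (hpi δ e θ) D * G D s (e y) (hpi δ e θ s (e y)) := by
    intro s
    rw [Finset.sum_comm]
    refine Finset.sum_le_sum fun y _ => ?_
    rw [← Finset.mul_sum]
    exact mul_le_mul_of_nonneg_left (coord hm δ h0 h1 n hn e he G hG0 hG s y) (by positivity)
  refine le_trans (le_of_eq ?_) (Finset.sum_le_sum fun s _ => h2 s)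
  simp only [Finset.sum_const, Finset.card_univ, nsmul_eq_mul, Fintype.card_prod,
    Fintype.card_fin, Fintype.card_bool]
  push_cast
  field_simp
  try ring

/-- minimax lower bound `c·√(|S||A|/n)` for transfer via hard labels,
for every (possibly randomized) estimator. -/
theorem stmt_0 :
    ∃ c : ℝ, 0 < c ∧
      ∀ (S A : Type) [Fintype S] [Fintype A] [Nonempty S],
        2 ≤ Fintype.card A →
        ∀ n : ℕ, 0 < n →
          (Fintype.card S * Fintype.card A : ℝ) / 4 ≤ n →
          ∀ (Ω : Type) [MeasurableSpace Ω] (μ : Measure Ω) [IsProbabilityMeasure μ]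
            (est : (Fin n → S × A) → Ω → S → A → ℝ),
            (∀ D, Measurable (est D)) →
            (∀ D ω, IsCondDist (est D ω)) →
            ∃ ρ : S → ℝ, ∃ πs : S → A → ℝ,
              IsDist ρ ∧ IsCondDist πs ∧
              c * Real.sqrt ((Fintype.card S * Fintype.card A : ℝ) / n) ≤
                ∑ D : Fin n → S × A, wt ρ πs D * ∫ ω, condTV ρ (est D ω) πs ∂μ := by
  classical
  refine ⟨1 / 32, by norm_num, ?_⟩
  intro S A _ _ _ hA n hn hSA Ω _ μ _ est hmeas hdist
  have hk : (0 : ℝ) < Fintype.card S := by exact_mod_cast Fintype.card_pos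
  have hn' : (0 : ℝ) < n := by exact_mod_cast hn
  obtain ⟨m, hm, hm2, hm3⟩ : ∃ m : ℕ, 0 < m ∧ m * 2 ≤ Fintype.card A ∧ Fintype.card A ≤ 3 * m :=
    ⟨Fintype.card A / 2, by omega, by omega, by omega⟩
  obtain ⟨e⟩ : Nonempty (Fin m × Bool ↪ A) := by
    apply Function.Embedding.nonempty_of_card_le
    simpa using hm2
  have hm2' : (m : ℝ) * 2 ≤ Fintype.card A := by exact_mod_cast hm2
  have hm3' : (Fintype.card A : ℝ) ≤ 3 * m := by exact_mod_cast hm3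
  set δ : ℝ := Real.sqrt (Fintype.card S * m / (4 * n)) with hδ
  have hδ2 : δ ^ 2 = Fintype.card S * m / (4 * n) := Real.sq_sqrt (by positivity)
  have h0 : 0 ≤ δ := Real.sqrt_nonneg _
  have h1 : δ ≤ 1 := by
    rw [hδ, Real.sqrt_le_left zero_le_one, one_pow, div_le_one (by positivity)]
    nlinarith
  have hint : ∀ D s a p, Integrable (fun ω => |est D ω s a - p|) μ := by
    intro D s a p
    have hme : Measurable fun ω => est D ω s a :=
      (measurable_pi_apply a).comp ((measurable_pi_apply s).comp (hmeas D))
    have hb : Integrable (fun ω => est D ω s a) μ := by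
      refine Integrable.of_bound hme.aestronglyMeasurable 1 (Filter.Eventually.of_forall fun ω => ?_)
      have hd := hdist D ω s
      rw [Real.norm_eq_abs, abs_of_nonneg (hd.1 a), ← hd.2]
      exact Finset.single_le_sum (fun b _ => hd.1 b) (Finset.mem_univ a)
    exact (hb.sub (integrable_const p)).abs
  obtain ⟨θ, hθ⟩ := assouad (S := S) hm δ h0 h1 n (by rw [hδ2]; field_simp) e e.injective
    (fun D s a p => ∫ ω, |est D ω s a - p| ∂μ)
    (fun D s a p => integral_nonneg fun ω => abs_nonneg _)
    (by
      intro D s a p q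
      rw [← integral_add (hint D s a p) (hint D s a q)]
      have : |p - q| = ∫ _ω, |p - q| ∂μ := by simp
      rw [this]
      refine integral_mono (integrable_const _) ((hint D s a p).add (hint D s a q)) fun ω => ?_
      have := abs_sub_le p (est D ω s a) q
      rwa [abs_sub_comm p (est D ω s a)] at this)
  refine ⟨fun _ => (Fintype.card S : ℝ)⁻¹, hpi δ e θ, unif_dist,
    hpi_dist hm δ h0 h1 e e.injective θ, ?_⟩
  have hI : ∀ D, ∫ ω, condTV (fun _ => (Fintype.card S : ℝ)⁻¹) (est D ω) (hpi δ e θ) ∂μ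
      = ∑ s, (Fintype.card S : ℝ)⁻¹ * ((1 / 2) * ∑ a, ∫ ω, |est D ω s a - hpi δ e θ s a| ∂μ) := by
    intro D
    unfold condTV
    rw [integral_finsetSum]
    · refine Finset.sum_congr rfl fun s _ => ?_
      rw [integral_const_mul, integral_const_mul, integral_finsetSum]
      intro a _
      exact hint D s a _
    · intro s _
      exact ((integrable_finsetSum _ fun a _ => hint D s a _).const_mul _).const_mul _
  simp only [hI]
  refine le_trans ?_ hθ
  have : Real.sqrt ((Fintype.card S * Fintype.card A : ℝ) / n) ≤ 4 * δ := by
    rw [Real.sqrt_le_left (by positivity), mul_pow, hδ2]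
    rw [div_le_iff₀ hn']
    have : (4 : ℝ) ^ 2 * (Fintype.card S * m / (4 * n)) * n = Fintype.card S * (4 * m) := by
      field_simp
    rw [this]
    have : (0 : ℝ) ≤ m := by positivity
    exact mul_le_mul_of_nonneg_left (by linarith) hk.le
  linarith
end

section
/- Let S and A be nonempty finite sets, ρ ∈ Δ(S), π* ∈ Δ(A|S), and let D be n i.i.d. samples from ρ×π*. Let π̂_MLE ∈ Δ(A|S) be any conditional distribution with π̂_MLE(a|s) = N((s,a),D)/N(s,D) whenever N(s,D) > 0. Then for every δ ∈ (0,1), with probability at least 1 − δ, TV(π̂_MLE ‖ π* | ρ) ≤ √( |S|·(|A|·log 2 + log((|S|+1)/δ)) / (2n) ) + √( 2·(|S|·log 2 + log((|S|+1)/δ)) / n ). -/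
open Finset

/-- `N((s,a), D)`: number of occurrences of the pair `(s,a)` in the dataset `D`. -/
def cntSA {S A : Type} [DecidableEq S] [DecidableEq A] {n : ℕ}
    (D : Fin n → S × A) (s : S) (a : A) : ℕ :=
  (univ.filter fun i => D i = (s, a)).card

/-- `N(s, D)`: number of occurrences of the input `s` in the dataset `D`. -/
def cntS {S A : Type} [DecidableEq S] {n : ℕ} (D : Fin n → S × A) (s : S) : ℕ :=
  (univ.filter fun i => (D i).1 = s).card

open scoped Classical

/-- Hoeffding's lemma for a Bernoulli variable. -/
lemma bern_mgf (q t : ℝ) (h0 : 0 ≤ q) (h1 : q ≤ 1) :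
    q * Real.exp (t * (1 - q)) + (1 - q) * Real.exp (t * (-q)) ≤ Real.exp (t ^ 2 / 8) := by
  let μ : MeasureTheory.Measure Bool :=
    ENNReal.ofReal q • MeasureTheory.Measure.dirac true +
      ENNReal.ofReal (1 - q) • MeasureTheory.Measure.dirac false
  have hμ : MeasureTheory.IsProbabilityMeasure μ := by
    constructor
    simp only [μ, MeasureTheory.Measure.add_apply, MeasureTheory.Measure.smul_apply, 
      MeasureTheory.measure_univ, smul_eq_mul, mul_one]
    rw [← ENNReal.ofReal_add h0 (by linarith)]
    simp
  have hint : ∀ f : Bool → ℝ, ∫ x, f x ∂μ = q * f true + (1 - q) * f false := by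
    intro f
    have i1 : MeasureTheory.IsFiniteMeasure
        (ENNReal.ofReal q • MeasureTheory.Measure.dirac true) :=
      MeasureTheory.Measure.smul_finite _ ENNReal.ofReal_ne_top
    have i2 : MeasureTheory.IsFiniteMeasure
        (ENNReal.ofReal (1 - q) • MeasureTheory.Measure.dirac false) :=
      MeasureTheory.Measure.smul_finite _ ENNReal.ofReal_ne_top
    rw [MeasureTheory.integral_add_measure (MeasureTheory.Integrable.of_finite)
      (MeasureTheory.Integrable.of_finite), MeasureTheory.integral_smul_measure,
      MeasureTheory.integral_smul_measure, MeasureTheory.integral_dirac,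
      MeasureTheory.integral_dirac, ENNReal.toReal_ofReal h0,
      ENNReal.toReal_ofReal (by linarith)]
    simp
  let X : Bool → ℝ := fun b => if b then 1 - q else -q
  have hX := ProbabilityTheory.hasSubgaussianMGF_of_mem_Icc_of_integral_eq_zero
    (μ := μ) (X := X) (a := -q) (b := 1 - q) (measurable_of_finite X).aemeasurable
    (Filter.Eventually.of_forall (by intro b; cases b <;> simp [X]))
    (by rw [hint]; simp only [X]; simp; ring)
  have h := hX.mgf_le t
  rw [ProbabilityTheory.mgf, hint] at h
  simp only [X] at h
  refine le_trans (le_of_eq ?_) (h.trans (le_of_eq ?_))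
  · simp
  · congr 1
    push_cast
    have : ‖1 - q - -q‖ = 1 := by
      have : 1 - q - -q = 1 := by ring
      rw [this]; simp
    rw [this]; ring

/-- Real-valued indicator. -/
noncomputable def ind {X : Type} (B : Finset X) (x : X) : ℝ := if x ∈ B then 1 else 0

lemma dist_mgf {X : Type} [Fintype X] (p : X → ℝ) (hp : IsDist p) (B : Finset X) (t : ℝ) :
    ∑ x, p x * Real.exp (t * (ind B x - ∑ y, p y * ind B y)) ≤ Real.exp (t ^ 2 / 8) := by
  set q := ∑ y, p y * ind B y with hq
  have hi : ∀ x, 0 ≤ ind B x ∧ ind B x ≤ 1 := by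
    intro x; unfold ind; split_ifs <;> norm_num
  have h0 : 0 ≤ q := Finset.sum_nonneg fun x _ => mul_nonneg (hp.1 x) (hi x).1
  have h1 : q ≤ 1 := by
    rw [← hp.2]
    exact Finset.sum_le_sum fun x _ => mul_le_of_le_one_right (hp.1 x) (hi x).2
  refine le_trans (le_of_eq ?_) (bern_mgf q t h0 h1)
  have hc : 1 - q = ∑ y, p y * (1 - ind B y) := by
    simp only [mul_sub, mul_one]
    rw [Finset.sum_sub_distrib, hp.2]
  have : ∀ x, p x * Real.exp (t * (ind B x - q)) =
      p x * ind B x * Real.exp (t * (1 - q)) + p x * (1 - ind B x) * Real.exp (t * (-q)) := by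
    intro x; unfold ind; split_ifs <;> simp
  rw [Finset.sum_congr rfl fun x _ => this x, Finset.sum_add_distrib, ← Finset.sum_mul,
    ← Finset.sum_mul, ← hc, ← hq]

lemma chernoff {X : Type} [Fintype X] {n : ℕ} (p : X → ℝ) (hp : ∀ x, 0 ≤ p x) (f : X → ℝ)
    (hf : ∀ t, ∑ x, p x * Real.exp (t * f x) ≤ Real.exp (t ^ 2 / 8)) (ε : ℝ) (hε : 0 ≤ ε) :
    ∑ D : Fin n → X, (if n * ε < ∑ i, f (D i) then ∏ i, p (D i) else 0)
      ≤ Real.exp (-(2 * n * ε ^ 2)) := by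
  calc _ ≤ ∑ D : Fin n → X, Real.exp (-(4 * n * ε ^ 2)) *
        ∏ i, (p (D i) * Real.exp ((4 * ε) * f (D i))) := by
        refine Finset.sum_le_sum fun D _ => ?_
        have hpos : 0 ≤ ∏ i, p (D i) := Finset.prod_nonneg fun i _ => hp _
        rw [Finset.prod_mul_distrib, ← Real.exp_sum, ← Finset.mul_sum, mul_left_comm,
          ← Real.exp_add]
        split_ifs with h
        · refine le_mul_of_one_le_right hpos (Real.one_le_exp ?_)
          nlinarith [mul_le_mul_of_nonneg_left h.le hε]
        · positivity
    _ = Real.exp (-(4 * n * ε ^ 2)) * (∑ x, p x * Real.exp ((4 * ε) * f x)) ^ n := by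
        rw [← Finset.mul_sum, Fintype.sum_pow]
    _ ≤ Real.exp (-(4 * n * ε ^ 2)) * (Real.exp ((4 * ε) ^ 2 / 8)) ^ n := by
        refine mul_le_mul_of_nonneg_left (pow_le_pow_left₀ ?_ (hf _) n) (Real.exp_pos _).le
        exact Finset.sum_nonneg fun x _ => mul_nonneg (hp x) (Real.exp_pos _).le
    _ = _ := by
        rw [← Real.exp_nat_mul, ← Real.exp_add]; congr 1; ring

/-- Centered indicator of a set of pairs, conditionally on the input. -/
noncomputable def gB {S A : Type} [Fintype A] (π : S → A → ℝ) (B : Finset (S × A))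
    (x : S × A) : ℝ := ind B x - ∑ a, π x.1 a * ind B (x.1, a)

/-- Centered indicator of a set of inputs. -/
noncomputable def gC {S A : Type} [Fintype S] (ρ : S → ℝ) (C : Finset S)
    (x : S × A) : ℝ := ind C x.1 - ∑ s, ρ s * ind C s

lemma mgfB {S A : Type} [Fintype S] [Fintype A] (ρ : S → ℝ) (π : S → A → ℝ) (hρ : IsDist ρ)
    (hπ : IsCondDist π) (B : Finset (S × A)) (t : ℝ) :
    ∑ x : S × A, (ρ x.1 * π x.1 x.2) * Real.exp (t * gB π B x) ≤ Real.exp (t ^ 2 / 8) := by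
  rw [Fintype.sum_prod_type]
  calc _ ≤ ∑ s, ρ s * Real.exp (t ^ 2 / 8) := by
        refine Finset.sum_le_sum fun s _ => ?_
        simp only [mul_assoc, ← Finset.mul_sum]
        refine mul_le_mul_of_nonneg_left ?_ (hρ.1 s)
        have h := dist_mgf (π s) (hπ s) (univ.filter fun a => (s, a) ∈ B) t
        have hi : ∀ a, ind (univ.filter fun a => (s, a) ∈ B) a = ind B (s, a) := by
          intro a
          by_cases hb : (s, a) ∈ B <;> simp [ind, hb]
        simp only [hi] at h
        exact h
    _ = _ := by rw [← Finset.sum_mul, hρ.2, one_mul]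

lemma mgfC {S A : Type} [Fintype S] [Fintype A] (ρ : S → ℝ) (π : S → A → ℝ) (hρ : IsDist ρ)
    (hπ : IsCondDist π) (C : Finset S) (t : ℝ) :
    ∑ x : S × A, (ρ x.1 * π x.1 x.2) * Real.exp (t * gC ρ C x) ≤ Real.exp (t ^ 2 / 8) := by
  rw [Fintype.sum_prod_type]
  refine le_trans (le_of_eq ?_) (dist_mgf ρ hρ C t)
  refine Finset.sum_congr rfl fun s _ => ?_
  simp only [gC]
  rw [← Finset.sum_mul, ← Finset.mul_sum, (hπ s).2, mul_one]

lemma sum_cntSA {S A : Type} [Fintype S] [Fintype A] [DecidableEq S] [DecidableEq A] {n : ℕ}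
    (D : Fin n → S × A) (f : S × A → ℝ) :
    ∑ i, f (D i) = ∑ s, ∑ a, (cntSA D s a : ℝ) * f (s, a) := by
  rw [← Fintype.sum_prod_type' (f := fun s a => (cntSA D s a : ℝ) * f (s, a)),
    ← Finset.sum_fiberwise (s := univ) (g := D) (f := fun i => f (D i))]
  refine Finset.sum_congr rfl fun x _ => ?_
  rw [Finset.sum_congr rfl (g := fun _ => f x)]
  · simp [cntSA]
  · intro i hi; rw [(Finset.mem_filter.1 hi).2]

lemma sum_cntS {S A : Type} [Fintype S] [DecidableEq S] {n : ℕ}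
    (D : Fin n → S × A) (f : S → ℝ) :
    ∑ i, f (D i).1 = ∑ s, (cntS D s : ℝ) * f s := by
  rw [← Finset.sum_fiberwise (s := univ) (g := fun i => (D i).1) (f := fun i => f (D i).1)]
  refine Finset.sum_congr rfl fun x _ => ?_
  rw [Finset.sum_congr rfl (g := fun _ => f x)]
  · simp [cntS]
  · intro i hi; rw [(Finset.mem_filter.1 hi).2]

lemma det {S A : Type} [Fintype S] [Fintype A] [DecidableEq S] [DecidableEq A]
    (ρ : S → ℝ) (π e : S → A → ℝ) (hρ : IsDist ρ) (hπ : IsCondDist π) (he : IsCondDist e)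
    (n : ℕ) (hn : 0 < n) (D : Fin n → S × A)
    (hmle : ∀ s a, 0 < cntS D s → e s a = (cntSA D s a : ℝ) / (cntS D s : ℝ))
    (ε₁ ε₂ : ℝ) (h1 : ∀ B, ∑ i, gB π B (D i) ≤ n * ε₁) (h2 : ∀ C, ∑ i, gC ρ C (D i) ≤ n * ε₂) :
    condTV ρ e π ≤ ε₁ + ε₂ := by
  let B : Finset (S × A) := univ.filter fun x => π x.1 x.2 < e x.1 x.2
  let C : Finset S := univ.filter fun s => n * ρ s ≤ cntS D s
  let T : S → ℝ := fun s => ∑ a, ind B (s, a) * (e s a - π s a)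
  have hT : ∀ s, (1 / 2) * ∑ a, |e s a - π s a| = T s := by
    intro s
    have h : ∀ a, |e s a - π s a| = 2 * (ind B (s, a) * (e s a - π s a)) - (e s a - π s a) := by
      intro a
      simp only [ind, B, Finset.mem_filter, Finset.mem_univ, true_and]
      split_ifs with h
      · rw [abs_of_pos (by linarith)]; ring
      · rw [abs_of_nonpos (by linarith)]; ring
    rw [Finset.sum_congr rfl fun a _ => h a, Finset.sum_sub_distrib, Finset.sum_sub_distrib,
      (he s).2, (hπ s).2, ← Finset.mul_sum]
    simp only [T]; ring
  have hT0 : ∀ s, 0 ≤ T s := fun s => by rw [← hT]; positivity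
  have hT1 : ∀ s, T s ≤ 1 := by
    intro s
    rw [← (he s).2]
    refine Finset.sum_le_sum fun a _ => ?_
    have := (he s).1 a
    have := (hπ s).1 a
    unfold ind
    split_ifs <;> linarith
  have hz : ∀ s a, (cntS D s : ℝ) * e s a = cntSA D s a := by
    intro s a
    rcases Nat.eq_zero_or_pos (cntS D s) with h | h
    · have h' : cntSA D s a ≤ cntS D s := by
        refine Finset.card_le_card fun i hi => ?_
        simp only [Finset.mem_filter, Finset.mem_univ, true_and] at hi ⊢
        rw [hi]
      have : cntSA D s a = 0 := by omega
      rw [h, this]; simp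
    · rw [hmle s a h]
      have : (cntS D s : ℝ) ≠ 0 := by positivity
      field_simp
  have k1 : ∑ s, (cntS D s : ℝ) * T s ≤ n * ε₁ := by
    refine le_trans (le_of_eq ?_) (h1 B)
    simp only [gB]
    rw [Finset.sum_sub_distrib, sum_cntSA D (fun x => ind B x),
      sum_cntS D (fun s => ∑ a, π s a * ind B (s, a)), ← Finset.sum_sub_distrib]
    refine Finset.sum_congr rfl fun s _ => ?_
    simp only [T]
    rw [Finset.mul_sum, Finset.mul_sum, ← Finset.sum_sub_distrib]
    refine Finset.sum_congr rfl fun a _ => ?_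
    rw [← hz]; ring
  have hcs : ∑ s, (cntS D s : ℝ) = n := by
    have := sum_cntS D (fun _ => (1 : ℝ))
    simpa using this.symm
  have k2 : ∑ s, (1 - ind C s) * (n * ρ s - cntS D s) ≤ n * ε₂ := by
    refine le_trans (le_of_eq ?_) (h2 C)
    simp only [gC]
    rw [Finset.sum_sub_distrib, sum_cntS D (fun s => ind C s)]
    have : ∀ s, (1 - ind C s) * (n * ρ s - cntS D s) =
        n * ρ s - cntS D s - n * (ρ s * ind C s) + cntS D s * ind C s := fun s => by ring
    rw [Finset.sum_congr rfl fun s _ => this s, Finset.sum_add_distrib, Finset.sum_sub_distrib,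
      Finset.sum_sub_distrib, hcs, ← Finset.mul_sum, ← Finset.mul_sum, hρ.2]
    simp
    ring
  have k3 : n * condTV ρ e π ≤ n * ε₁ + n * ε₂ := by
    refine le_trans ?_ (add_le_add k1 k2)
    rw [condTV, Finset.mul_sum, ← Finset.sum_add_distrib]
    refine Finset.sum_le_sum fun s _ => ?_
    rw [hT]
    simp only [ind, C, Finset.mem_filter, Finset.mem_univ, true_and]
    have := hT0 s
    have := hT1 s
    split_ifs with h
    · nlinarith
    · nlinarith
  have hn' : (0 : ℝ) < n := by exact_mod_cast hn
  rw [← mul_add] at k3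
  exact le_of_mul_le_mul_left k3 hn'

lemma sum_wt {S A : Type} [Fintype S] [Fintype A] (ρ : S → ℝ) (π : S → A → ℝ) (hρ : IsDist ρ)
    (hπ : IsCondDist π) (n : ℕ) : ∑ D : Fin n → S × A, wt ρ π D = 1 := by
  simp only [wt]
  rw [← Fintype.sum_pow (fun x : S × A => ρ x.1 * π x.1 x.2) n, Fintype.sum_prod_type]
  simp only [← Finset.mul_sum]
  rw [Finset.sum_congr rfl fun s _ => by rw [(hπ s).2, mul_one], hρ.2, one_pow]

lemma key {S A : Type} [Fintype S] [Fintype A] [DecidableEq S] [DecidableEq A]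
    (ρ : S → ℝ) (π : S → A → ℝ) (hρ : IsDist ρ) (hπ : IsCondDist π)
    (n : ℕ) (hn : 0 < n) (est : (Fin n → S × A) → S → A → ℝ) (hest : ∀ D, IsCondDist (est D))
    (hmle : ∀ D s a, 0 < cntS D s → est D s a = (cntSA D s a : ℝ) / (cntS D s : ℝ))
    (ε₁ ε₂ : ℝ) (h1 : 0 ≤ ε₁) (h2 : 0 ≤ ε₂) :
    1 ≤ (∑ D : Fin n → S × A, if condTV ρ (est D) π ≤ ε₁ + ε₂ then wt ρ π D else 0) +
      ((2 : ℝ) ^ (Fintype.card S * Fintype.card A) * Real.exp (-(2 * n * ε₁ ^ 2)) +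
        (2 : ℝ) ^ (Fintype.card S) * Real.exp (-(2 * n * ε₂ ^ 2))) := by
  have hp : ∀ x : S × A, 0 ≤ ρ x.1 * π x.1 x.2 := fun x => mul_nonneg (hρ.1 _) ((hπ _).1 _)
  have hw : ∀ D : Fin n → S × A, 0 ≤ wt ρ π D := fun D => Finset.prod_nonneg fun i _ => hp _
  have e1 : ∑ B : Finset (S × A), ∑ D : Fin n → S × A,
      (if n * ε₁ < ∑ i, gB π B (D i) then wt ρ π D else 0) ≤
      (2 : ℝ) ^ (Fintype.card S * Fintype.card A) * Real.exp (-(2 * n * ε₁ ^ 2)) := by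
    refine (Finset.sum_le_sum fun B _ => chernoff _ hp (gB π B) (mgfB ρ π hρ hπ B) ε₁ h1).trans ?_
    simp
  have e2 : ∑ C : Finset S, ∑ D : Fin n → S × A,
      (if n * ε₂ < ∑ i, gC ρ C (D i) then wt ρ π D else 0) ≤
      (2 : ℝ) ^ (Fintype.card S) * Real.exp (-(2 * n * ε₂ ^ 2)) := by
    refine (Finset.sum_le_sum fun C _ => chernoff _ hp (gC ρ C) (mgfC ρ π hρ hπ C) ε₂ h2).trans ?_
    simp
  refine le_trans ?_ (add_le_add le_rfl (add_le_add e1 e2))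
  rw [Finset.sum_comm, Finset.sum_comm (s := (univ : Finset (Finset S))),
    ← Finset.sum_add_distrib, ← Finset.sum_add_distrib, ← sum_wt ρ π hρ hπ n]
  refine Finset.sum_le_sum fun D _ => ?_
  have n1 : ∀ B : Finset (S × A), 0 ≤ (if n * ε₁ < ∑ i, gB π B (D i) then wt ρ π D else 0) := by
    intro B; split_ifs; exacts [hw D, le_rfl]
  have n2 : ∀ C : Finset S, 0 ≤ (if n * ε₂ < ∑ i, gC ρ C (D i) then wt ρ π D else 0) := by
    intro B; split_ifs; exacts [hw D, le_rfl]
  have s1 := Finset.sum_nonneg fun B (_ : B ∈ (univ : Finset (Finset (S × A)))) => n1 B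
  have s2 := Finset.sum_nonneg fun B (_ : B ∈ (univ : Finset (Finset S))) => n2 B
  by_cases hB : ∃ B, n * ε₁ < ∑ i, gB π B (D i)
  · obtain ⟨B, hB⟩ := hB
    have := Finset.single_le_sum (fun B _ => n1 B) (Finset.mem_univ B)
    rw [if_pos hB] at this
    have h3 : 0 ≤ (if condTV ρ (est D) π ≤ ε₁ + ε₂ then wt ρ π D else 0) := by
      split_ifs; exacts [hw D, le_rfl]
    linarith
  by_cases hC : ∃ C, n * ε₂ < ∑ i, gC ρ C (D i)
  · obtain ⟨C, hC⟩ := hC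
    have := Finset.single_le_sum (fun C _ => n2 C) (Finset.mem_univ C)
    rw [if_pos hC] at this
    have h3 : 0 ≤ (if condTV ρ (est D) π ≤ ε₁ + ε₂ then wt ρ π D else 0) := by
      split_ifs; exacts [hw D, le_rfl]
    linarith
  push Not at hB hC
  rw [if_pos (det ρ π (est D) hρ hπ (hest D) n hn D (hmle D) ε₁ ε₂ hB hC)]
  linarith

/-- high-probability upper bound for the maximum likelihood estimator. -/
theorem stmt_1 (S A : Type) [Fintype S] [Fintype A] [Nonempty S] [Nonempty A]
    [DecidableEq S] [DecidableEq A]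
    (ρ : S → ℝ) (πs : S → A → ℝ) (hρ : IsDist ρ) (hπs : IsCondDist πs)
    (n : ℕ) (hn : 0 < n)
    (est : (Fin n → S × A) → S → A → ℝ)
    (hest : ∀ D, IsCondDist (est D))
    (hmle : ∀ D s a, 0 < cntS D s → est D s a = (cntSA D s a : ℝ) / (cntS D s : ℝ))
    (δ : ℝ) (hδ0 : 0 < δ) (hδ1 : δ < 1) :
    1 - δ ≤
      ∑ D : Fin n → S × A,
        if condTV ρ (est D) πs ≤
            Real.sqrt ((Fintype.card S : ℝ) *
                ((Fintype.card A : ℝ) * Real.log 2 +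
                  Real.log (((Fintype.card S : ℝ) + 1) / δ)) / (2 * n)) +
            Real.sqrt (2 * ((Fintype.card S : ℝ) * Real.log 2 +
                  Real.log (((Fintype.card S : ℝ) + 1) / δ)) / n)
          then wt ρ πs D else 0 := by
  set k : ℝ := (Fintype.card S : ℝ) with hk
  set m : ℝ := (Fintype.card A : ℝ) with hm
  set L : ℝ := Real.log ((k + 1) / δ) with hL
  have hk1 : 1 ≤ k := by
    rw [hk]; exact_mod_cast Fintype.card_pos (α := S)
  have hm0 : 0 ≤ m := by positivity
  have hn' : (0 : ℝ) < n := by exact_mod_cast hn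
  have hl2 : 0 < Real.log 2 := Real.log_pos (by norm_num)
  have hL0 : 0 ≤ L := Real.log_nonneg (by rw [le_div_iff₀ hδ0]; linarith)
  have hexp : Real.exp (-L) = δ / (k + 1) := by
    rw [Real.exp_neg, hL, Real.exp_log (by positivity), inv_div]
  have hhalf : Real.exp (-L) ≤ δ / 2 := by
    rw [hexp]; exact div_le_div_of_nonneg_left hδ0.le (by norm_num) (by linarith)
  have hpow : ∀ j : ℕ, (2 : ℝ) ^ j = Real.exp (j * Real.log 2) := by
    intro j; rw [Real.exp_nat_mul, Real.exp_log (by norm_num)]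
  have h := key ρ πs hρ hπs n hn est hest hmle
    (Real.sqrt (k * (m * Real.log 2 + L) / (2 * n)))
    (Real.sqrt (2 * (k * Real.log 2 + L) / n)) (Real.sqrt_nonneg _) (Real.sqrt_nonneg _)
  rw [Real.sq_sqrt (by positivity), Real.sq_sqrt (by positivity), hpow, hpow,
    ← Real.exp_add, ← Real.exp_add] at h
  have b1 : Real.exp (((Fintype.card S * Fintype.card A : ℕ) : ℝ) * Real.log 2 +
      -(2 * n * (k * (m * Real.log 2 + L) / (2 * n)))) ≤ δ / 2 := by
    refine le_trans (Real.exp_le_exp.2 ?_) hhalf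
    have : 2 * n * (k * (m * Real.log 2 + L) / (2 * n)) = k * (m * Real.log 2 + L) := by
      field_simp
    rw [this]
    push_cast
    rw [← hk, ← hm]
    nlinarith
  have b2 : Real.exp (((Fintype.card S : ℕ) : ℝ) * Real.log 2 +
      -(2 * n * (2 * (k * Real.log 2 + L) / n))) ≤ δ / 2 := by
    refine le_trans (Real.exp_le_exp.2 ?_) hhalf
    have : 2 * n * (2 * (k * Real.log 2 + L) / n) = 4 * (k * Real.log 2 + L) := by
      field_simp; ring
    rw [this, ← hk]
    have : 0 ≤ k * Real.log 2 := by positivity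
    linarith
  linarith
end

section
/- Let S and A be nonempty finite sets, ρ ∈ Δ(S), π* ∈ Δ(A|S), and let D be n i.i.d. samples from ρ×π*. Let π̂_MLE ∈ Δ(A|S) be any conditional distribution with π̂_MLE(a|s) = N((s,a),D)/N(s,D) whenever N(s,D) > 0. Then the expected risk satisfies E[ TV(π̂_MLE ‖ π* | ρ) ] ≤ √( |S||A| / (2n) ) + √( |S| / n ). -/
open Finset

/-- number of occurrences in an input sequence -/
def cntV {S : Type} [DecidableEq S] {n : ℕ} (σ : Fin n → S) (s : S) : ℕ :=
  (univ.filter fun i => σ i = s).card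

lemma sum_prod_eq {B : Type} [Fintype B] {n : ℕ} (g : Fin n → B → ℝ) :
    ∑ α : Fin n → B, ∏ i, g i (α i) = ∏ i, ∑ b, g i b := by
  classical
  rw [Finset.prod_univ_sum, Fintype.piFinset_univ]

lemma sum_split {S A : Type} [Fintype S] [Fintype A] {n : ℕ}
    (F : (Fin n → S × A) → ℝ) :
    ∑ D, F D = ∑ σ : Fin n → S, ∑ α : Fin n → A, F (fun i => (σ i, α i)) := by
  classical
  rw [← Fintype.sum_prod_type' (f := fun (σ : Fin n → S) (α : Fin n → A) => F (fun i => (σ i, α i)))]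
  exact Fintype.sum_equiv (Equiv.arrowProdEquivProdArrow (Fin n) (fun _ => S) (fun _ => A)) _ _ (fun D => rfl)

lemma var_sum {B : Type} [Fintype B] {n : ℕ} (p f : Fin n → B → ℝ)
    (hp : ∀ i, ∑ b, p i b = 1) (hf : ∀ i, ∑ b, p i b * f i b = 0) :
    ∑ α : Fin n → B, (∏ i, p i (α i)) * (∑ i, f i (α i)) ^ 2
      = ∑ i, ∑ b, p i b * f i b ^ 2 := by
  classical
  have key : ∀ i j : Fin n, ∑ α : Fin n → B, (∏ k, p k (α k)) * (f i (α i) * f j (α j))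
      = if i = j then ∑ b, p i b * f i b ^ 2 else 0 := by
    intro i j
    have h1 : ∀ α : Fin n → B, (∏ k, p k (α k)) * (f i (α i) * f j (α j))
        = ∏ k, (p k (α k) * ((if k = i then f k (α k) else 1) * (if k = j then f k (α k) else 1))) := by
      intro α
      rw [Finset.prod_mul_distrib, Finset.prod_mul_distrib]
      simp
    simp_rw [h1]
    rw [sum_prod_eq (fun k b => p k b * ((if k = i then f k b else 1) * (if k = j then f k b else 1)))]
    split_ifs with hij
    · subst hij
      rw [Finset.prod_eq_single i]
      · simp [pow_two]
      · intro k _ hk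
        simp [hk, hp]
      · simp
    · apply Finset.prod_eq_zero (Finset.mem_univ i)
      simp [hij, hf]
  calc _ = ∑ α : Fin n → B, ∑ i, ∑ j, (∏ k, p k (α k)) * (f i (α i) * f j (α j)) := by
        apply Finset.sum_congr rfl
        intro α _
        rw [pow_two, Finset.sum_mul_sum, Finset.mul_sum]
        simp_rw [Finset.mul_sum]
    _ = ∑ i, ∑ j, ∑ α : Fin n → B, (∏ k, p k (α k)) * (f i (α i) * f j (α j)) := by
        rw [Finset.sum_comm]
        apply Finset.sum_congr rfl
        intro i _
        rw [Finset.sum_comm]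
    _ = _ := by
        simp_rw [key]
        simp

lemma cntV_eq {S : Type} [DecidableEq S] {n : ℕ} (σ : Fin n → S) (s : S) :
    cntV σ s = ∑ i, if σ i = s then 1 else 0 := by
  simp [cntV]

lemma inv_bound {S : Type} [Fintype S] [DecidableEq S] (ρ : S → ℝ) (hρ : IsDist ρ) (n : ℕ) (s : S) :
    ((n : ℝ) + 1) * (ρ s * ∑ σ : Fin n → S, (∏ i, ρ (σ i)) * (1 / ((cntV σ s : ℝ) + 1))) ≤ 1 := by
  have h0 : ∑ σ : Fin (n + 1) → S, ∏ i, ρ (σ i) = 1 := by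
    rw [sum_prod_eq (fun _ => ρ)]
    simp [hρ.2]
  have hi : ∀ i : Fin (n + 1), ∑ σ : Fin (n + 1) → S,
      (∏ j, ρ (σ j)) * ((if σ i = s then 1 else 0) / (cntV σ s : ℝ))
      = ρ s * ∑ σ : Fin n → S, (∏ i, ρ (σ i)) * (1 / ((cntV σ s : ℝ) + 1)) := by
    intro i
    rw [← (Fin.insertNthEquiv (fun _ => S) i).sum_comp, Fintype.sum_prod_type,
      Finset.sum_eq_single s]
    · rw [Finset.mul_sum]
      apply Finset.sum_congr rfl
      intro τ _
      rw [Fin.prod_univ_succAbove _ i, cntV_eq, Fin.sum_univ_succAbove _ i]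
      simp [cntV_eq, Fin.insertNthEquiv]
      ring
    · intro x _ hx
      simp [Fin.insertNthEquiv, hx]
    · simp
  calc _ = ∑ i : Fin (n + 1), ∑ σ : Fin (n + 1) → S,
      (∏ j, ρ (σ j)) * ((if σ i = s then 1 else 0) / (cntV σ s : ℝ)) := by
        simp_rw [hi]
        simp
    _ = ∑ σ : Fin (n + 1) → S, (∏ j, ρ (σ j)) * ((cntV σ s : ℝ) / cntV σ s) := by
        rw [Finset.sum_comm]
        apply Finset.sum_congr rfl
        intro σ _
        rw [← Finset.mul_sum, ← Finset.sum_div]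
        congr 2
        simp [cntV_eq]
    _ ≤ ∑ σ : Fin (n + 1) → S, ∏ j, ρ (σ j) := by
        apply Finset.sum_le_sum
        intro σ _
        exact mul_le_of_le_one_right (Finset.prod_nonneg fun i _ => hρ.1 _) (div_self_le_one _)
    _ = 1 := h0

lemma sq_bound {S A : Type} [Fintype S] [Fintype A] [DecidableEq S] [DecidableEq A]
    (πs : S → A → ℝ) (hπs : IsCondDist πs) {n : ℕ} (σ : Fin n → S) (s : S) :
    ∑ α : Fin n → A, (∏ i, πs (σ i) (α i)) *
      ∑ a, ((cntSA (fun i => (σ i, α i)) s a : ℝ) - cntV σ s * πs s a) ^ 2 ≤ cntV σ s := by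
  have h1 : ∀ a, ∑ α : Fin n → A, (∏ i, πs (σ i) (α i)) *
      ((cntSA (fun i => (σ i, α i)) s a : ℝ) - cntV σ s * πs s a) ^ 2 ≤ cntV σ s * πs s a := by
    intro a
    have hv := var_sum (fun i => πs (σ i))
      (fun i b => if σ i = s then (if b = a then 1 else 0) - πs s a else 0)
      (fun i => (hπs _).2) (by
        intro i
        by_cases h : σ i = s
        · simp [h, mul_sub, Finset.sum_sub_distrib, ← Finset.sum_mul, (hπs s).2]
        · simp [h])
    have he : ∀ α : Fin n → A, ((cntSA (fun i => (σ i, α i)) s a : ℝ) - cntV σ s * πs s a)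
        = ∑ i, (if σ i = s then (if α i = a then 1 else 0) - πs s a else 0) := by
      intro α
      have : ∀ i, (if σ i = s then (if α i = a then (1:ℝ) else 0) - πs s a else 0)
        = (if σ i = s ∧ α i = a then 1 else 0) - (if σ i = s then 1 else 0) * πs s a := by
        intro i
        by_cases h : σ i = s <;> simp [h]
      simp_rw [this]
      rw [Finset.sum_sub_distrib, ← Finset.sum_mul]
      simp [cntSA, cntV, Prod.ext_iff]
    simp_rw [he]
    rw [hv]
    have hc : (cntV σ s : ℝ) * πs s a = ∑ i, (if σ i = s then 1 else 0) * πs s a := by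
      rw [← Finset.sum_mul]; simp [cntV]
    rw [hc]
    apply Finset.sum_le_sum
    intro i _
    by_cases h : σ i = s
    · simp only [h, if_true, one_mul]
      have : ∀ b, πs s b * ((if b = a then 1 else 0) - πs s a) ^ 2
          = (if b = a then πs s b * (1 - 2 * πs s a) else 0) + πs s b * (πs s a) ^ 2 := by
        intro b
        split_ifs <;> ring
      simp_rw [this]
      rw [Finset.sum_add_distrib, ← Finset.sum_mul, (hπs s).2]
      simp
      nlinarith [sq_nonneg (πs s a)]
    · simp [h]
  calc _ = ∑ a, ∑ α : Fin n → A, (∏ i, πs (σ i) (α i)) *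
      ((cntSA (fun i => (σ i, α i)) s a : ℝ) - cntV σ s * πs s a) ^ 2 := by
        rw [Finset.sum_comm]; simp_rw [Finset.mul_sum]
    _ ≤ ∑ a, cntV σ s * πs s a := Finset.sum_le_sum fun a _ => h1 a
    _ = _ := by rw [← Finset.mul_sum, (hπs s).2, mul_one]

lemma marg {S A : Type} [Fintype S] [Fintype A] [DecidableEq S]
    (ρ : S → ℝ) (πs : S → A → ℝ) (hπs : IsCondDist πs) {n : ℕ} (F : (Fin n → S) → ℝ) :
    ∑ D : Fin n → S × A, wt ρ πs D * F (fun i => (D i).1) =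
      ∑ σ : Fin n → S, (∏ i, ρ (σ i)) * F σ := by
  rw [sum_split]
  apply Finset.sum_congr rfl
  intro σ _
  simp only [wt, Finset.prod_mul_distrib]
  rw [← Finset.sum_mul, ← Finset.mul_sum, sum_prod_eq (fun i => πs (σ i))]
  simp [(hπs _).2]

lemma main_sq {S A : Type} [Fintype S] [Fintype A] [DecidableEq S] [DecidableEq A]
    (ρ : S → ℝ) (πs : S → A → ℝ) (hρ : IsDist ρ) (hπs : IsCondDist πs) {n : ℕ} (s : S) :
    ∑ D : Fin n → S × A, wt ρ πs D *
      (if 0 < cntS D s then ∑ a, ((cntSA D s a : ℝ) / cntS D s - πs s a) ^ 2 else 0) ≤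
    2 * ∑ σ : Fin n → S, (∏ i, ρ (σ i)) * (1 / ((cntV σ s : ℝ) + 1)) := by
  rw [sum_split, Finset.mul_sum]
  apply Finset.sum_le_sum
  intro σ _
  have hc : ∀ α : Fin n → A, cntS (fun i => (σ i, α i)) s = cntV σ s := fun α => rfl
  simp only [hc, wt, Finset.prod_mul_distrib]
  have hP : 0 ≤ ∏ i, ρ (σ i) := Finset.prod_nonneg fun i _ => hρ.1 _
  by_cases h : 0 < cntV σ s
  · have hN : (1:ℝ) ≤ cntV σ s := by exact_mod_cast h
    have hN0 : (0:ℝ) < cntV σ s := by linarith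
    simp only [h, if_true]
    have h2 : ∀ α : Fin n → A, ∑ a, ((cntSA (fun i => (σ i, α i)) s a : ℝ) / cntV σ s - πs s a) ^ 2
        = (1 / (cntV σ s : ℝ) ^ 2) *
          ∑ a, ((cntSA (fun i => (σ i, α i)) s a : ℝ) - cntV σ s * πs s a) ^ 2 := by
      intro α
      rw [Finset.mul_sum]
      apply Finset.sum_congr rfl
      intro a _
      field_simp
    simp_rw [h2]
    calc _ = (∏ i, ρ (σ i)) * ((1 / (cntV σ s : ℝ) ^ 2) * ∑ α : Fin n → A, (∏ i, πs (σ i) (α i)) *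
          ∑ a, ((cntSA (fun i => (σ i, α i)) s a : ℝ) - cntV σ s * πs s a) ^ 2) := by
          rw [Finset.mul_sum, Finset.mul_sum]
          apply Finset.sum_congr rfl
          intro α _
          ring
      _ ≤ (∏ i, ρ (σ i)) * ((1 / (cntV σ s : ℝ) ^ 2) * cntV σ s) := by
          gcongr
          exact sq_bound πs hπs σ s
      _ ≤ (∏ i, ρ (σ i)) * (2 * (1 / ((cntV σ s : ℝ) + 1))) := by
          refine mul_le_mul_of_nonneg_left ?_ hP
          rw [show (1 / (cntV σ s : ℝ) ^ 2) * cntV σ s = 1 / cntV σ s by field_simp, mul_one_div,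
            div_le_div_iff₀ hN0 (by linarith)]
          linarith
      _ = _ := by ring
  · simp only [h, if_false, mul_zero, Finset.sum_const_zero]
    positivity

/-- worst-case expected-risk upper bound for the MLE:
`E[TV(π̂_MLE ‖ π* | ρ)] ≤ √(|S||A|/(2n)) + √(|S|/n)`. -/
theorem stmt_2 (S A : Type) [Fintype S] [Fintype A] [Nonempty S] [Nonempty A]
    [DecidableEq S] [DecidableEq A]
    (ρ : S → ℝ) (πs : S → A → ℝ) (hρ : IsDist ρ) (hπs : IsCondDist πs)
    (n : ℕ) (hn : 0 < n)
    (est : (Fin n → S × A) → S → A → ℝ)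
    (hest : ∀ D, IsCondDist (est D))
    (hmle : ∀ D s a, 0 < cntS D s → est D s a = (cntSA D s a : ℝ) / (cntS D s : ℝ)) :
    ∑ D : Fin n → S × A, wt ρ πs D * condTV ρ (est D) πs ≤
      Real.sqrt ((Fintype.card S * Fintype.card A : ℝ) / (2 * n)) +
      Real.sqrt ((Fintype.card S : ℝ) / n) := by
  set E : S → ℝ := fun s => ∑ σ : Fin n → S, (∏ i, ρ (σ i)) * (1 / ((cntV σ s : ℝ) + 1)) with hE
  have hnR : (0:ℝ) < n := by exact_mod_cast hn
  have hE0 : ∀ s, 0 ≤ E s := fun s => Finset.sum_nonneg fun σ _ =>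
    mul_nonneg (Finset.prod_nonneg fun i _ => hρ.1 _) (by positivity)
  have hEb : ∀ s, ρ s * E s ≤ 1 / n := by
    intro s
    have h1 := inv_bound ρ hρ n s
    have h2 : 0 ≤ ρ s * E s := mul_nonneg (hρ.1 s) (hE0 s)
    rw [le_div_iff₀ hnR]
    simp only [hE] at h2 ⊢
    nlinarith
  have hw : ∀ D : Fin n → S × A, 0 ≤ wt ρ πs D := fun D =>
    Finset.prod_nonneg fun i _ => mul_nonneg (hρ.1 _) ((hπs _).1 _)
  have hP1 : ∑ σ : Fin n → S, ∏ i, ρ (σ i) = 1 := by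
    rw [sum_prod_eq (fun _ => ρ)]; simp [hρ.2]
  have hw1 : ∑ D : Fin n → S × A, wt ρ πs D = 1 := by
    have := marg ρ πs hπs (n := n) (fun _ => 1)
    simpa [hP1] using this
  -- the two parts
  set Z : (Fin n → S × A) → S → ℝ := fun D s => if 0 < cntS D s then 0 else 1 with hZ
  set Q : (Fin n → S × A) → S → ℝ := fun D s =>
    if 0 < cntS D s then (1 / 2) * ∑ a, |(cntSA D s a : ℝ) / cntS D s - πs s a| else 0 with hQ
  have hT : ∀ D s, (1 / 2) * ∑ a, |est D s a - πs s a| ≤ Q D s + Z D s := by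
    intro D s
    by_cases h : 0 < cntS D s
    · simp only [hQ, hZ, h, if_true, add_zero]
      simp_rw [hmle D s _ h]
      exact le_rfl
    · simp only [hQ, hZ, h, if_false, zero_add]
      have : ∑ a, |est D s a - πs s a| ≤ ∑ a, (est D s a + πs s a) := by
        apply Finset.sum_le_sum
        intro a _
        have h1 := (hest D s).1 a
        have h2 := (hπs s).1 a
        rw [abs_le]; constructor <;> linarith
      rw [Finset.sum_add_distrib, (hest D s).2, (hπs s).2] at this
      linarith
  have hsplit : ∑ D : Fin n → S × A, wt ρ πs D * condTV ρ (est D) πs ≤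
      (∑ D : Fin n → S × A, ∑ s, (wt ρ πs D * ρ s) * Q D s) +
        ∑ s, ρ s * ∑ D : Fin n → S × A, wt ρ πs D * Z D s := by
    calc _ ≤ ∑ D : Fin n → S × A, ∑ s, ((wt ρ πs D * ρ s) * Q D s + ρ s * (wt ρ πs D * Z D s)) := by
          apply Finset.sum_le_sum
          intro D _
          rw [condTV, Finset.mul_sum]
          apply Finset.sum_le_sum
          intro s _
          have := mul_le_mul_of_nonneg_left (hT D s) (mul_nonneg (hw D) (hρ.1 s))
          linarith
      _ = _ := by
          simp_rw [Finset.sum_add_distrib]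
          congr 1
          rw [Finset.sum_comm]
          simp_rw [Finset.mul_sum]
  have hZb : ∀ s, ∑ D : Fin n → S × A, wt ρ πs D * Z D s ≤ E s := by
    intro s
    have := marg ρ πs hπs (n := n) (fun σ => 1 / ((cntV σ s : ℝ) + 1))
    simp only [hE]
    rw [← this]
    apply Finset.sum_le_sum
    intro D _
    apply mul_le_mul_of_nonneg_left _ (hw D)
    have hc : cntV (fun i => (D i).1) s = cntS D s := rfl
    rw [hc]
    by_cases h : 0 < cntS D s
    · simp only [hZ, h, if_true]; positivity
    · have h0 : cntS D s = 0 := by omega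
      simp [hZ, h0]
  have hZ1 : ∀ s, ∑ D : Fin n → S × A, wt ρ πs D * Z D s ≤ 1 := by
    intro s
    rw [← hw1]
    apply Finset.sum_le_sum
    intro D _
    apply mul_le_of_le_one_right (hw D)
    simp only [hZ]; split_ifs <;> norm_num
  have hpart2 : ∑ s, ρ s * ∑ D : Fin n → S × A, wt ρ πs D * Z D s ≤
      Real.sqrt ((Fintype.card S : ℝ) / n) := by
    set X := ∑ s, ρ s * ∑ D : Fin n → S × A, wt ρ πs D * Z D s with hX
    have hX1 : X ≤ 1 := by
      rw [← hρ.2]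
      exact Finset.sum_le_sum fun s _ => mul_le_of_le_one_right (hρ.1 s) (hZ1 s)
    have hX2 : X ≤ (Fintype.card S : ℝ) / n := by
      calc X ≤ ∑ s : S, (1 / n : ℝ) := Finset.sum_le_sum fun s _ =>
            (mul_le_mul_of_nonneg_left (hZb s) (hρ.1 s)).trans (hEb s)
        _ = _ := by simp [div_eq_mul_inv]
    have hX0 : 0 ≤ X := Finset.sum_nonneg fun s _ => mul_nonneg (hρ.1 s)
      (Finset.sum_nonneg fun D _ => mul_nonneg (hw D) (by simp only [hZ]; split_ifs <;> norm_num))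
    apply Real.le_sqrt_of_sq_le
    nlinarith
  have hQ2 : ∀ D s, Q D s ^ 2 ≤ (Fintype.card A : ℝ) / 4 *
      (if 0 < cntS D s then ∑ a, ((cntSA D s a : ℝ) / cntS D s - πs s a) ^ 2 else 0) := by
    intro D s
    by_cases h : 0 < cntS D s
    · simp only [hQ, h, if_true]
      have := sq_sum_le_card_mul_sum_sq (s := (univ : Finset A))
        (f := fun a => |(cntSA D s a : ℝ) / cntS D s - πs s a|)
      simp only [sq_abs, Finset.card_univ] at this
      rw [mul_pow]
      linarith
    · simp [hQ, h]
  have hpart1 : (∑ D : Fin n → S × A, ∑ s, (wt ρ πs D * ρ s) * Q D s) ≤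
      Real.sqrt ((Fintype.card S * Fintype.card A : ℝ) / (2 * n)) := by
    apply Real.le_sqrt_of_sq_le
    have hcs : (∑ D : Fin n → S × A, ∑ s, (wt ρ πs D * ρ s) * Q D s) ^ 2 ≤
        ∑ D : Fin n → S × A, ∑ s, (wt ρ πs D * ρ s) * Q D s ^ 2 := by
      have hn1 : ∑ x : (Fin n → S × A) × S, wt ρ πs x.1 * ρ x.2 = 1 := by
        rw [Fintype.sum_prod_type]
        simp only [← Finset.mul_sum, hρ.2, mul_one, hw1]
      have h := Finset.sum_sq_le_sum_mul_sum_of_sq_le_mul (univ : Finset ((Fin n → S × A) × S))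
        (r := fun x => (wt ρ πs x.1 * ρ x.2) * Q x.1 x.2)
        (f := fun x => wt ρ πs x.1 * ρ x.2)
        (g := fun x => (wt ρ πs x.1 * ρ x.2) * Q x.1 x.2 ^ 2)
        (fun x _ => mul_nonneg (hw _) (hρ.1 _))
        (fun x _ => mul_nonneg (mul_nonneg (hw _) (hρ.1 _)) (sq_nonneg _))
        (fun x _ => le_of_eq (by ring))
      rw [hn1, one_mul, Fintype.sum_prod_type, Fintype.sum_prod_type] at h
      exact h
    refine hcs.trans ?_
    calc _ ≤ ∑ D : Fin n → S × A, ∑ s, (wt ρ πs D * ρ s) * ((Fintype.card A : ℝ) / 4 *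
      (if 0 < cntS D s then ∑ a, ((cntSA D s a : ℝ) / cntS D s - πs s a) ^ 2 else 0)) := by
          apply Finset.sum_le_sum
          intro D _
          apply Finset.sum_le_sum
          intro s _
          exact mul_le_mul_of_nonneg_left (hQ2 D s) (mul_nonneg (hw D) (hρ.1 s))
      _ = ∑ s, (Fintype.card A : ℝ) / 4 * (ρ s * ∑ D : Fin n → S × A, wt ρ πs D *
      (if 0 < cntS D s then ∑ a, ((cntSA D s a : ℝ) / cntS D s - πs s a) ^ 2 else 0)) := by
          rw [Finset.sum_comm]
          apply Finset.sum_congr rfl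
          intro s _
          rw [Finset.mul_sum, Finset.mul_sum]
          apply Finset.sum_congr rfl
          intro D _
          ring
      _ ≤ ∑ s : S, (Fintype.card A : ℝ) / 4 * (2 * (1 / n)) := by
          apply Finset.sum_le_sum
          intro s _
          apply mul_le_mul_of_nonneg_left _ (by positivity)
          have h1 := mul_le_mul_of_nonneg_left (main_sq ρ πs hρ hπs (n := n) s) (hρ.1 s)
          have h2 := hEb s
          simp only [hE] at h2
          linarith
      _ = _ := by
          rw [Finset.sum_const, Finset.card_univ, nsmul_eq_mul]
          field_simp
          try ring
  exact hsplit.trans (add_le_add hpart1 hpart2)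
end

section
/- There is a universal constant C > 0 with the following property. Let S and A be nonempty finite sets, ρ ∈ Δ(S), π* ∈ Δ(A|S), and let D be n i.i.d. samples from ρ×π*. Let π̂_MLE ∈ Δ(A|S) be any conditional distribution with π̂_MLE(a|s) = N((s,a),D)/N(s,D) whenever N(s,D) > 0. Then E[ TV(π̂_MLE ‖ π* | ρ) ] ≤ C·( √( ξ(π*)·|S||A| / n ) + |S|/n ), where ξ(π*) := 2·max_{s∈S} min_{a∈A} (1 − π*(a|s)). -/
open Finset

/-- `ξ(π*) = 2·max_{s} min_{a} (1 − π*(a|s))`. -/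
noncomputable def xi {S A : Type} [Fintype S] [Fintype A] [Nonempty S] [Nonempty A]
    (πs : S → A → ℝ) : ℝ :=
  2 * (univ.sup' univ_nonempty fun s => univ.inf' univ_nonempty fun a => 1 - πs s a)

/-- First and second moments of a sum of centered i.i.d. terms. -/
theorem moments_aux {T : Type} [Fintype T] (w f : T → ℝ) (hw : ∑ x, w x = 1)
    (hf : ∑ x, w x * f x = 0) (n : ℕ) :
    (∑ D : Fin n → T, ∏ i, w (D i)) = 1 ∧
    (∑ D : Fin n → T, (∏ i, w (D i)) * ∑ i, f (D i)) = 0 ∧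
    (∑ D : Fin n → T, (∏ i, w (D i)) * (∑ i, f (D i)) ^ 2) = n * ∑ x, w x * f x ^ 2 := by
  induction n with
  | zero => simp
  | succ n ih =>
    obtain ⟨h0, h1, h2⟩ := ih
    have key : ∀ G : (Fin (n + 1) → T) → ℝ,
        ∑ D, G D = ∑ x : T, ∑ D : Fin n → T, G (Fin.cons x D) := by
      intro G
      rw [← Fintype.sum_prod_type']
      exact (Fintype.sum_equiv (Fin.consEquiv fun _ => T) _ _ (fun _ => rfl)).symm
    refine ⟨?_, ?_, ?_⟩
    · rw [key]
      simp only [Fin.prod_univ_succ, Fin.cons_zero, Fin.cons_succ, ← Finset.mul_sum, h0, mul_one, hw]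
    · rw [key]
      simp only [Fin.prod_univ_succ, Fin.sum_univ_succ, Fin.cons_zero, Fin.cons_succ]
      have : ∀ x : T, ∑ D : Fin n → T, w x * (∏ i, w (D i)) * (f x + ∑ i, f (D i))
          = w x * f x := by
        intro x
        have e : ∀ D : Fin n → T, w x * (∏ i, w (D i)) * (f x + ∑ i, f (D i))
          = w x * f x * (∏ i, w (D i)) + w x * ((∏ i, w (D i)) * ∑ i, f (D i)) := by
          intro D; ring
        simp only [e, Finset.sum_add_distrib, ← Finset.mul_sum, h0, h1]
        ring
      simp only [this, hf]
    · rw [key]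
      simp only [Fin.prod_univ_succ, Fin.sum_univ_succ, Fin.cons_zero, Fin.cons_succ]
      have : ∀ x : T, ∑ D : Fin n → T, w x * (∏ i, w (D i)) * (f x + ∑ i, f (D i)) ^ 2
          = w x * f x ^ 2 + w x * (n * ∑ x, w x * f x ^ 2) := by
        intro x
        have e : ∀ D : Fin n → T, w x * (∏ i, w (D i)) * (f x + ∑ i, f (D i)) ^ 2
          = w x * f x ^ 2 * (∏ i, w (D i)) + 2 * w x * f x * ((∏ i, w (D i)) * ∑ i, f (D i))
            + w x * ((∏ i, w (D i)) * (∑ i, f (D i)) ^ 2) := by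
          intro D; ring
        simp only [e, Finset.sum_add_distrib, ← Finset.mul_sum, h0, h1, h2]
        ring
      simp only [this, Finset.sum_add_distrib, ← Finset.sum_mul, hw]
      push_cast
      ring

/-- The Gini impurity of each row is at most `ξ`. -/
theorem gini_le_xi {S A : Type} [Fintype S] [Fintype A] [Nonempty S] [Nonempty A]
    (πs : S → A → ℝ) (h : IsCondDist πs) (s : S) :
    ∑ a, πs s a * (1 - πs s a) ≤ xi πs := by
  obtain ⟨b, -, hb⟩ := Finset.exists_mem_eq_inf' (univ_nonempty (α := A)) (fun a => 1 - πs s a)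
  have h1 : 1 - πs s b ≤ univ.sup' univ_nonempty
      fun s => univ.inf' univ_nonempty fun a => 1 - πs s a := by
    rw [← hb]
    exact Finset.le_sup' (fun s => univ.inf' univ_nonempty fun a => 1 - πs s a) (mem_univ s)
  have h2 : πs s b ^ 2 ≤ ∑ a, πs s a ^ 2 :=
    Finset.single_le_sum (f := fun a => πs s a ^ 2) (fun a _ => sq_nonneg _) (mem_univ b)
  have h3 : ∑ a, πs s a * (1 - πs s a) = 1 - ∑ a, πs s a ^ 2 := by
    simp only [mul_sub, mul_one, Finset.sum_sub_distrib, (h s).2, sq]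
  rw [h3, xi]
  nlinarith [sq_nonneg (1 - πs s b)]

/-- `ℓ¹` distance of two distributions is at most two. -/
theorem l1_le_two {A : Type} [Fintype A] (p q : A → ℝ) (hp : IsDist p) (hq : IsDist q) :
    ∑ a, |p a - q a| ≤ 2 := by
  calc ∑ a, |p a - q a| ≤ ∑ a, (p a + q a) := by
        refine Finset.sum_le_sum fun a _ => ?_
        have := hp.1 a
        have := hq.1 a
        rw [abs_le]; constructor <;> linarith
    _ = 2 := by rw [Finset.sum_add_distrib, hp.2, hq.2]; norm_num

/-- Pointwise bound for one input. -/
theorem pointwise_aux {S A : Type} [Fintype A] [DecidableEq S] [DecidableEq A]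
    (r : ℝ) (hr : 0 ≤ r) (q : A → ℝ) (hq : IsDist q) (n : ℕ) (hn : 0 < n)
    (D : Fin n → S × A) (s : S) (e : A → ℝ) (he : IsDist e)
    (hmle : ∀ a, 0 < cntS D s → e a = (cntSA D s a : ℝ) / (cntS D s : ℝ)) :
    r * ((1 / 2) * ∑ a, |e a - q a|) ≤
      (1 / n : ℝ) * ∑ a, |(cntSA D s a : ℝ) - q a * cntS D s|
        + 4 / (n ^ 2 * r) * ((cntS D s : ℝ) - n * r) ^ 2 := by
  have hn' : (0 : ℝ) < n := by exact_mod_cast hn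
  have hs : 0 ≤ ∑ a, |(cntSA D s a : ℝ) - q a * cntS D s| :=
    Finset.sum_nonneg fun a _ => abs_nonneg _
  rcases hr.eq_or_lt with h0 | hpos
  · rw [← h0]
    simp only [zero_mul, mul_zero, div_zero, add_zero]
    positivity
  by_cases hN : n * r / 2 ≤ (cntS D s : ℝ)
  · have hNpos : (0 : ℝ) < cntS D s := lt_of_lt_of_le (by positivity) hN
    have hN0 : 0 < cntS D s := by exact_mod_cast hNpos
    have hterm : ∀ a, |e a - q a| = |(cntSA D s a : ℝ) - q a * cntS D s| / cntS D s := by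
      intro a
      rw [hmle a hN0, ← abs_of_pos hNpos, ← abs_div, abs_of_pos hNpos]
      congr 1
      field_simp
    simp only [hterm, ← Finset.sum_div]
    have : r * (1 / 2 * ((∑ a, |(cntSA D s a : ℝ) - q a * cntS D s|) / cntS D s)) ≤
        (1 / n : ℝ) * ∑ a, |(cntSA D s a : ℝ) - q a * cntS D s| := by
      have h1 : r / 2 / cntS D s ≤ 1 / n := by
        rw [div_le_div_iff₀ hNpos hn']; linarith
      calc _ = r / 2 / cntS D s * ∑ a, |(cntSA D s a : ℝ) - q a * cntS D s| := by ring
        _ ≤ _ := mul_le_mul_of_nonneg_right h1 hs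
    have : 0 ≤ 4 / (n ^ 2 * r) * ((cntS D s : ℝ) - n * r) ^ 2 := by positivity
    linarith
  · push Not at hN
    have h1 := l1_le_two e q he hq
    have h2 : r * ((1 / 2) * ∑ a, |e a - q a|) ≤ r := by nlinarith
    have h3 : r ≤ 4 / (n ^ 2 * r) * ((cntS D s : ℝ) - n * r) ^ 2 := by
      rw [div_mul_eq_mul_div, le_div_iff₀ (by positivity)]
      have : n * r / 2 ≤ n * r - cntS D s := by linarith
      have h4 : (n * r / 2) ^ 2 ≤ (n * r - cntS D s) ^ 2 := by
        apply pow_le_pow_left₀ _ this; positivity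
      nlinarith
    have : 0 ≤ (1 / n : ℝ) * ∑ a, |(cntSA D s a : ℝ) - q a * cntS D s| := by positivity
    linarith

section
variable {S A : Type} [Fintype S] [Fintype A] [DecidableEq S] [DecidableEq A]
    (ρ : S → ℝ) (πs : S → A → ℝ) (hρ : IsDist ρ) (hπ : IsCondDist πs)

theorem w_sum (hρ : IsDist ρ) (hπ : IsCondDist πs) :
    ∑ x : S × A, ρ x.1 * πs x.1 x.2 = 1 := by
  rw [Fintype.sum_prod_type]
  simp only [← Finset.mul_sum, (hπ _).2, mul_one, hρ.2]

theorem w_sum_if (hπ : IsCondDist πs) (s : S) :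
    ∑ x : S × A, ρ x.1 * πs x.1 x.2 * (if x.1 = s then 1 else 0) = ρ s := by
  rw [Fintype.sum_prod_type]
  simp [← Finset.mul_sum, (hπ _).2]

theorem w_sum_if2 (s : S) (a : A) :
    ∑ x : S × A, ρ x.1 * πs x.1 x.2 * (if x = (s, a) then 1 else 0) = ρ s * πs s a := by
  simp

theorem second_N (hρ : IsDist ρ) (hπ : IsCondDist πs) (n : ℕ) (s : S) :
    ∑ D : Fin n → S × A, wt ρ πs D * ((cntS D s : ℝ) - n * ρ s) ^ 2
      = n * (ρ s * (1 - ρ s)) := by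
  have h := (moments_aux (fun x : S × A => ρ x.1 * πs x.1 x.2)
    (fun x => (if x.1 = s then 1 else 0) - ρ s) (w_sum ρ πs hρ hπ) (by
      simp only [mul_sub, Finset.sum_sub_distrib, w_sum_if ρ πs hπ, ← Finset.sum_mul,
        w_sum ρ πs hρ hπ]
      ring) n).2.2
  have e : ∀ x : S × A, ρ x.1 * πs x.1 x.2 * ((if x.1 = s then (1 : ℝ) else 0) - ρ s) ^ 2
      = (1 - 2 * ρ s) * (ρ x.1 * πs x.1 x.2 * (if x.1 = s then 1 else 0))
        + ρ s ^ 2 * (ρ x.1 * πs x.1 x.2) := by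
    intro x; split_ifs <;> ring
  simp only [e, Finset.sum_add_distrib, ← Finset.mul_sum, w_sum_if ρ πs hπ,
    w_sum ρ πs hρ hπ] at h
  convert h using 1
  · refine Finset.sum_congr rfl fun D _ => ?_
    simp [wt, cntS, Finset.sum_sub_distrib]
  · ring

theorem second_Z (hρ : IsDist ρ) (hπ : IsCondDist πs) (n : ℕ) (s : S) (a : A) :
    ∑ D : Fin n → S × A, wt ρ πs D * ((cntSA D s a : ℝ) - πs s a * cntS D s) ^ 2
      = n * (ρ s * (πs s a * (1 - πs s a))) := by
  have h := (moments_aux (fun x : S × A => ρ x.1 * πs x.1 x.2)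
    (fun x => (if x = (s, a) then 1 else 0) - πs s a * (if x.1 = s then 1 else 0))
      (w_sum ρ πs hρ hπ) (by
      simp only [mul_sub, Finset.sum_sub_distrib, mul_left_comm _ (πs s a), ← Finset.mul_sum,
        w_sum_if ρ πs hπ, w_sum_if2]
      ring) n).2.2
  have e : ∀ x : S × A, ρ x.1 * πs x.1 x.2 *
        ((if x = (s, a) then (1 : ℝ) else 0) - πs s a * (if x.1 = s then 1 else 0)) ^ 2
      = (1 - 2 * πs s a) * (ρ x.1 * πs x.1 x.2 * (if x = (s, a) then 1 else 0))
        + πs s a ^ 2 * (ρ x.1 * πs x.1 x.2 * (if x.1 = s then 1 else 0)) := by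
    intro x
    by_cases h1 : x = (s, a)
    · subst h1; simp; ring
    · simp only [h1, if_false]; split_ifs <;> ring
  simp only [e, Finset.sum_add_distrib, ← Finset.mul_sum, w_sum_if ρ πs hπ,
    w_sum_if2] at h
  convert h using 1
  · refine Finset.sum_congr rfl fun D _ => ?_
    rw [Finset.sum_sub_distrib, ← Finset.mul_sum, Finset.sum_boole, Finset.sum_boole]
    rfl
  · ring

end

/-- instance-dependent expected-risk upper bound for the MLE:
`E[TV(π̂_MLE ‖ π* | ρ)] ≤ C·(√(ξ(π*)·|S||A|/n) + |S|/n)` for a universal constant `C`. -/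
theorem stmt_3 :
    ∃ C : ℝ, 0 < C ∧
      ∀ (S A : Type) [Fintype S] [Fintype A] [Nonempty S] [Nonempty A]
        [DecidableEq S] [DecidableEq A]
        (ρ : S → ℝ) (πs : S → A → ℝ), IsDist ρ → IsCondDist πs →
        ∀ (n : ℕ), 0 < n →
        ∀ (est : (Fin n → S × A) → S → A → ℝ),
          (∀ D, IsCondDist (est D)) →
          (∀ D s a, 0 < cntS D s → est D s a = (cntSA D s a : ℝ) / (cntS D s : ℝ)) →
          ∑ D : Fin n → S × A, wt ρ πs D * condTV ρ (est D) πs ≤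
            C * (Real.sqrt (xi πs * (Fintype.card S * Fintype.card A : ℝ) / n) +
              (Fintype.card S : ℝ) / n) := by
  refine ⟨4, by norm_num, ?_⟩
  intro S A _ _ _ _ _ _ ρ πs hρ hπ n hn est hest hmle
  have hn' : (0 : ℝ) < n := by exact_mod_cast hn
  have hwt : ∀ D : Fin n → S × A, 0 ≤ wt ρ πs D := fun D =>
    Finset.prod_nonneg fun i _ => mul_nonneg (hρ.1 _) ((hπ _).1 _)
  have hwt1 : ∑ D : Fin n → S × A, wt ρ πs D = 1 :=
    (moments_aux (fun x : S × A => ρ x.1 * πs x.1 x.2) (fun _ => 0) (w_sum ρ πs hρ hπ)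
      (by simp) n).1
  set M : ℝ := ∑ x : (Fin n → S × A) × S × A,
    wt ρ πs x.1 * |(cntSA x.1 x.2.1 x.2.2 : ℝ) - πs x.2.1 x.2.2 * cntS x.1 x.2.1| with hM
  have hM2 : M ^ 2 ≤ (Fintype.card S * Fintype.card A : ℝ) * (n * xi πs) := by
    have hcs := Finset.sum_sq_le_sum_mul_sum_of_sq_eq_mul
      (univ : Finset ((Fin n → S × A) × S × A))
      (r := fun x => wt ρ πs x.1 *
        |(cntSA x.1 x.2.1 x.2.2 : ℝ) - πs x.2.1 x.2.2 * cntS x.1 x.2.1|)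
      (f := fun x => wt ρ πs x.1)
      (g := fun x => wt ρ πs x.1 *
        ((cntSA x.1 x.2.1 x.2.2 : ℝ) - πs x.2.1 x.2.2 * cntS x.1 x.2.1) ^ 2)
      (fun x _ => hwt _) (fun x _ => mul_nonneg (hwt _) (sq_nonneg _))
      (fun x _ => by rw [mul_pow, sq_abs]; ring)
    have h1 : ∑ x : (Fin n → S × A) × S × A, wt ρ πs x.1
        = (Fintype.card S * Fintype.card A : ℝ) := by
      rw [Fintype.sum_prod_type]
      simp [← Finset.mul_sum, ← Finset.sum_mul, hwt1]
    have h2 : ∑ x : (Fin n → S × A) × S × A, wt ρ πs x.1 *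
        ((cntSA x.1 x.2.1 x.2.2 : ℝ) - πs x.2.1 x.2.2 * cntS x.1 x.2.1) ^ 2 ≤ n * xi πs := by
      rw [Fintype.sum_prod_type_right, Fintype.sum_prod_type]
      simp only [second_Z ρ πs hρ hπ, ← Finset.mul_sum]
      refine mul_le_mul_of_nonneg_left ?_ hn'.le
      calc _ ≤ ∑ s, ρ s * xi πs := Finset.sum_le_sum fun s _ =>
            mul_le_mul_of_nonneg_left (gini_le_xi πs hπ s) (hρ.1 s)
        _ = xi πs := by rw [← Finset.sum_mul, hρ.2, one_mul]
    refine hcs.trans ?_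
    rw [h1]
    exact mul_le_mul_of_nonneg_left h2 (by positivity)
  have hMs : M / n ≤ Real.sqrt (xi πs * (Fintype.card S * Fintype.card A : ℝ) / n) := by
    apply Real.le_sqrt_of_sq_le
    rw [div_pow, div_le_div_iff₀ (by positivity) hn']
    nlinarith
  have hR : ∑ D : Fin n → S × A, ∑ s, wt ρ πs D *
      (4 / (n ^ 2 * ρ s) * ((cntS D s : ℝ) - n * ρ s) ^ 2) ≤ 4 * ((Fintype.card S : ℝ) / n) := by
    rw [Finset.sum_comm]
    simp only [mul_left_comm (wt ρ πs _), ← Finset.mul_sum, second_N ρ πs hρ hπ]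
    calc _ ≤ ∑ s : S, (4 / n : ℝ) := by
          refine Finset.sum_le_sum fun s _ => ?_
          rcases (hρ.1 s).eq_or_lt with h0 | hpos
          · rw [← h0]; simp; positivity
          · rw [div_mul_eq_mul_div, div_le_div_iff₀ (by positivity) hn']
            have : 0 ≤ (n : ℝ) ^ 2 * ρ s * ρ s := by positivity
            nlinarith
      _ = _ := by simp; ring
  have hmain : ∑ D : Fin n → S × A, wt ρ πs D * condTV ρ (est D) πs ≤ M / n +
      ∑ D : Fin n → S × A, ∑ s, wt ρ πs D *
      (4 / (n ^ 2 * ρ s) * ((cntS D s : ℝ) - n * ρ s) ^ 2) := by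
    rw [hM, Fintype.sum_prod_type, Finset.sum_div, ← Finset.sum_add_distrib]
    refine Finset.sum_le_sum fun D _ => ?_
    rw [Fintype.sum_prod_type, Finset.sum_div, ← Finset.sum_add_distrib, condTV, Finset.mul_sum]
    refine Finset.sum_le_sum fun s _ => ?_
    have := mul_le_mul_of_nonneg_left (pointwise_aux (ρ s) (hρ.1 s) (πs s) (hπ s) n hn D s
      (est D s) (hest D s) (fun a => hmle D s a)) (hwt D)
    refine this.trans (le_of_eq ?_)
    simp only [← Finset.mul_sum]
    ring
  have := Real.sqrt_nonneg (xi πs * (Fintype.card S * Fintype.card A : ℝ) / n)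
  linarith
end

section
/- There is a universal constant C > 0 with the following property. Let S and A be nonempty finite sets with |S| ≥ 2, ρ ∈ Δ(S), π* ∈ Δ(A|S), and let D = ((s_1,a_1),…,(s_n,a_n)) be n i.i.d. samples from ρ×π*. Let π̂ ∈ Δ(A|S) be any conditional distribution satisfying π̂(a_i|s_i) = π*(a_i|s_i) for every i ∈ {1,…,n}. Then for every δ ∈ (0, min(1, (|S|+2)/10)), with probability at least 1 − δ, TV(π̂ ‖ π* | ρ) ≤ C · ( |S|·(|A| + √(|A|·log((|S|+2)/δ))) / n ) · log( |S|·(|S|+2)/δ ). -/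
open Finset

open scoped Classical

lemma aux_ind {X : Type} [Fintype X] (U : Finset X) (f : X → ℝ) :
    ∑ x, (if x ∈ U then f x else 0) = ∑ x ∈ U, f x := by
  simp

lemma aux_tv {S A : Type} [Fintype S] [Fintype A] (ρ : S → ℝ) (p q : S → A → ℝ)
    (hρ : ∀ s, 0 ≤ ρ s) (hp : IsCondDist p) (hq : IsCondDist q) (U : Finset (S × A))
    (hU : ∀ x, x ∉ U → p x.1 x.2 = q x.1 x.2) :
    condTV ρ p q ≤ ∑ x ∈ U, ρ x.1 * q x.1 x.2 := by
  have h1 : ∑ x ∈ U, ρ x.1 * q x.1 x.2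
      = ∑ s, ρ s * ∑ a, (if (s, a) ∈ U then q s a else 0) := by
    rw [← aux_ind U]
    rw [Fintype.sum_prod_type]
    refine Finset.sum_congr rfl fun s _ => ?_
    rw [Finset.mul_sum]
    refine Finset.sum_congr rfl fun a _ => ?_
    split_ifs <;> simp
  rw [h1]
  unfold condTV
  refine Finset.sum_le_sum fun s _ => mul_le_mul_of_nonneg_left ?_ (hρ s)
  have h2 : (1 / 2) * ∑ a, |p s a - q s a|
      = ∑ a, ((1 / 2) * |p s a - q s a| - (1 / 2) * (p s a - q s a)) := by
    rw [Finset.sum_sub_distrib, ← Finset.mul_sum, ← Finset.mul_sum, Finset.sum_sub_distrib,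
      (hp s).2, (hq s).2]
    ring
  rw [h2]
  refine Finset.sum_le_sum fun a _ => ?_
  have hp0 := (hp s).1 a
  have hq0 := (hq s).1 a
  split_ifs with h
  · rcases abs_cases (p s a - q s a) with ⟨h, _⟩ | ⟨h, _⟩ <;> rw [h] <;> linarith
  · have := hU (s, a) h
    simp only at this
    simp [this]

lemma aux_union {X : Type} [Fintype X] (q : X → ℝ) (hq : ∀ x, 0 ≤ q x) (hs : ∑ x, q x = 1)
    (n : ℕ) (B : ℝ) :
    1 - 2 ^ (Fintype.card X) * Real.exp (-(n * B)) ≤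
      ∑ D : Fin n → X, if ∑ x ∈ univ.filter (fun x => ∀ i, D i ≠ x), q x ≤ B
        then ∏ i, q (D i) else 0 := by
  have hpow : ∀ f : X → ℝ, ∑ D : Fin n → X, ∏ i, f (D i) = (∑ x, f x) ^ n := by
    intro f
    rw [Finset.sum_pow', Fintype.piFinset_univ]
  have htot := hpow q
  rw [hs, one_pow] at htot
  have hU : ∀ U : Finset X, B < ∑ x ∈ U, q x →
      ∑ D : Fin n → X, ∏ i, (if D i ∈ U then 0 else q (D i)) ≤ Real.exp (-(n * B)) := by
    intro U hB
    rw [hpow (fun x => if x ∈ U then 0 else q x)]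
    have e : ∑ x, (if x ∈ U then 0 else q x) = 1 - ∑ x ∈ U, q x := by
      rw [← hs, ← aux_ind U, ← Finset.sum_sub_distrib]
      refine Finset.sum_congr rfl fun x _ => ?_
      split_ifs <;> simp
    have e0 : 0 ≤ ∑ x, (if x ∈ U then 0 else q x) :=
      Finset.sum_nonneg fun x _ => by split_ifs; exacts [le_rfl, hq x]
    calc (∑ x, (if x ∈ U then 0 else q x)) ^ n ≤ (Real.exp (-B)) ^ n := by
          refine pow_le_pow_left₀ e0 ?_ n
          have := Real.add_one_le_exp (-B)
          linarith
      _ = Real.exp (-(n * B)) := by rw [← Real.exp_nat_mul]; ring_nf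
  have hnn : ∀ (U : Finset X) (D : Fin n → X), 0 ≤ ∏ i, (if D i ∈ U then 0 else q (D i)) :=
    fun U D => Finset.prod_nonneg fun i _ => by split_ifs; exacts [le_rfl, hq _]
  have key : ∀ D : Fin n → X, ∏ i, q (D i) ≤
      (if ∑ x ∈ univ.filter (fun x => ∀ i, D i ≠ x), q x ≤ B then ∏ i, q (D i) else 0)
      + ∑ U ∈ univ.filter (fun U : Finset X => B < ∑ x ∈ U, q x),
          ∏ i, (if D i ∈ U then 0 else q (D i)) := by
    intro D
    split_ifs with h
    · have := Finset.sum_nonneg (s := univ.filter (fun U : Finset X => B < ∑ x ∈ U, q x))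
        (fun U _ => hnn U D)
      linarith
    · rw [zero_add]
      have hm : univ.filter (fun x => ∀ i, D i ≠ x) ∈
          univ.filter (fun U : Finset X => B < ∑ x ∈ U, q x) := by
        rw [Finset.mem_filter]
        exact ⟨Finset.mem_univ _, not_le.mp h⟩
      refine le_trans (le_of_eq ?_) (Finset.single_le_sum (fun U _ => hnn U D) hm)
      refine Finset.prod_congr rfl fun i _ => ?_
      rw [if_neg]
      intro hi
      rw [Finset.mem_filter] at hi
      exact hi.2 i rfl
  have hsum := Finset.sum_le_sum (s := univ) fun D _ => key D
  rw [Finset.sum_add_distrib, htot, Finset.sum_comm (s := univ)] at hsum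
  have hbad : ∑ U ∈ univ.filter (fun U : Finset X => B < ∑ x ∈ U, q x),
      ∑ D : Fin n → X, ∏ i, (if D i ∈ U then 0 else q (D i))
      ≤ 2 ^ (Fintype.card X) * Real.exp (-(n * B)) := by
    refine le_trans (Finset.sum_le_card_nsmul _ _ _
      fun U hm => hU U (Finset.mem_filter.mp hm).2) ?_
    rw [nsmul_eq_mul]
    refine mul_le_mul_of_nonneg_right ?_ (Real.exp_pos _).le
    have : (univ.filter (fun U : Finset X => B < ∑ x ∈ U, q x)).card ≤ 2 ^ Fintype.card X := by
      refine (Finset.card_filter_le _ _).trans ?_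
      rw [Finset.card_univ, Fintype.card_finset]
    exact_mod_cast this
  linarith

/-- high-probability upper bound for any empirical squared error
logit loss minimizer (a learner matching the teacher probability on every
sampled pair), in the case `|S| ≥ 2`. -/
theorem stmt_10 :
    ∃ C : ℝ, 0 < C ∧
      ∀ (S A : Type) [Fintype S] [Fintype A] [Nonempty A],
        2 ≤ Fintype.card S →
        ∀ (ρ : S → ℝ) (πs : S → A → ℝ), IsDist ρ → IsCondDist πs →
        ∀ (n : ℕ), 0 < n →
        ∀ (est : (Fin n → S × A) → S → A → ℝ),
          (∀ D, IsCondDist (est D)) →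
          (∀ D (i : Fin n), est D (D i).1 (D i).2 = πs (D i).1 (D i).2) →
          ∀ δ : ℝ, 0 < δ → δ < min 1 (((Fintype.card S : ℝ) + 2) / 10) →
            1 - δ ≤
              ∑ D : Fin n → S × A,
                if condTV ρ (est D) πs ≤
                    C * ((Fintype.card S : ℝ) *
                        ((Fintype.card A : ℝ) +
                          Real.sqrt ((Fintype.card A : ℝ) *
                            Real.log (((Fintype.card S : ℝ) + 2) / δ))) / n) *
                      Real.log ((Fintype.card S : ℝ) *
                        ((Fintype.card S : ℝ) + 2) / δ)
                  then wt ρ πs D else 0 := by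
  refine ⟨1, one_pos, ?_⟩
  intro S A _ _ _ hS ρ πs hρ hπ n hn est hest hmatch δ hδ hδ'
  have hδ1 : δ < 1 := lt_of_lt_of_le hδ' (min_le_left _ _)
  set B := 1 * ((Fintype.card S : ℝ) * ((Fintype.card A : ℝ) +
    Real.sqrt ((Fintype.card A : ℝ) * Real.log (((Fintype.card S : ℝ) + 2) / δ))) / n) *
      Real.log ((Fintype.card S : ℝ) * ((Fintype.card S : ℝ) + 2) / δ) with hB
  have hq : ∀ x : S × A, 0 ≤ ρ x.1 * πs x.1 x.2 :=
    fun x => mul_nonneg (hρ.1 _) ((hπ _).1 _)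
  have hq1 : ∑ x : S × A, ρ x.1 * πs x.1 x.2 = 1 := by
    rw [Fintype.sum_prod_type]
    simp only [← Finset.mul_sum, (hπ _).2, mul_one, hρ.2]
  have main := aux_union (fun x : S × A => ρ x.1 * πs x.1 x.2) hq hq1 n B
  have hle : (2 : ℝ) ^ (Fintype.card (S × A)) * Real.exp (-(n * B)) ≤ δ := by
    have hS' : (2 : ℝ) ≤ Fintype.card S := by exact_mod_cast hS
    have hn' : (0 : ℝ) < n := by exact_mod_cast hn
    set L := Real.log ((Fintype.card S : ℝ) * ((Fintype.card S : ℝ) + 2) / δ) with hL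
    have hL8 : Real.log (8 / δ) ≤ L := by
      refine Real.log_le_log (by positivity) ?_
      gcongr
      nlinarith
    have hlog0 : 0 ≤ Real.log (8 / δ) := by
      refine Real.log_nonneg ?_
      rw [le_div_iff₀ hδ]
      linarith
    have hnB : (Fintype.card (S × A) : ℝ) * Real.log (8 / δ) ≤ n * B := by
      have : n * B = (Fintype.card S : ℝ) * ((Fintype.card A : ℝ) +
        Real.sqrt ((Fintype.card A : ℝ) * Real.log (((Fintype.card S : ℝ) + 2) / δ))) * L := by
        rw [hB]; field_simp
      rw [this, Fintype.card_prod, Nat.cast_mul]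
      gcongr
      exact le_add_of_nonneg_right (Real.sqrt_nonneg _)
    have hN : Fintype.card (S × A) ≠ 0 := by
      rw [Fintype.card_prod]
      have := Fintype.card_pos (α := A)
      positivity
    calc (2 : ℝ) ^ (Fintype.card (S × A)) * Real.exp (-(n * B))
        ≤ (2 : ℝ) ^ (Fintype.card (S × A)) *
          Real.exp (-((Fintype.card (S × A) : ℝ) * Real.log (8 / δ))) := by gcongr
      _ = (2 * (8 / δ)⁻¹) ^ (Fintype.card (S × A)) := by
          rw [mul_pow, ← mul_neg, Real.exp_nat_mul, Real.exp_neg, Real.exp_log (by positivity)]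
      _ = (δ / 4) ^ (Fintype.card (S × A)) := by
          congr 1
          field_simp
          norm_num
      _ ≤ δ / 4 := pow_le_of_le_one (by positivity) (by linarith) hN
      _ ≤ δ := by linarith
  refine le_trans (by linarith) (main.trans ?_)
  refine Finset.sum_le_sum fun D _ => ?_
  have hwt : 0 ≤ wt ρ πs D := Finset.prod_nonneg fun i _ => hq (D i)
  split_ifs with h1 h2 h2
  · exact le_rfl
  · refine absurd (le_trans ?_ h1) h2
    refine aux_tv ρ (est D) πs hρ.1 (hest D) hπ _ ?_
    intro x hx
    simp only [Finset.mem_filter, Finset.mem_univ, true_and, not_forall, not_not] at hx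
    obtain ⟨i, rfl⟩ := hx
    exact hmatch D i
  · exact hwt
  · exact le_rfl
end

section
/- There is a universal constant C > 0 with the following property. Let A be a nonempty finite set (|S| = 1), π* a probability distribution on A, and a_1,…,a_n i.i.d. samples from π*. Let π̂ be any probability distribution on A satisfying π̂(a_i) = π*(a_i) for every i ∈ {1,…,n}. Then for every δ ∈ (0, 1/10], with probability at least 1 − δ, TV(π̂, π*) ≤ C·( |A|/n + (√|A|/n)·log(1/δ) ), where TV(p,q) := (1/2)·Σ_{a∈A} |p(a) − q(a)|. -/
open Finset

/-- Total variation distance between two pmfs on a finite set. -/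
noncomputable def tvDist {A : Type} [Fintype A] (p q : A → ℝ) : ℝ :=
  (1 / 2) * ∑ a, |p a - q a|

/-- Probability of the sample sequence `D` under `n` i.i.d. samples from `π`. -/
noncomputable def wt1 {A : Type} {n : ℕ} (π : A → ℝ) (D : Fin n → A) : ℝ :=
  ∏ i, π (D i)

open scoped Classical

lemma tv_le_missing {A : Type} [Fintype A] (p q : A → ℝ) (hp : IsDist p) (hq : IsDist q)
    (U : Finset A) (h : ∀ a, a ∉ U → p a = q a) : tvDist p q ≤ ∑ a ∈ U, q a := by
  have h1 : ∑ a ∈ U, |p a - q a| = ∑ a, |p a - q a| := by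
    apply Finset.sum_subset (Finset.subset_univ _)
    intro a _ ha
    simp [h a ha]
  have h2 : ∑ a ∈ U, (p a - q a) = ∑ a, (p a - q a) := by
    apply Finset.sum_subset (Finset.subset_univ _)
    intro a _ ha
    simp [h a ha]
  rw [Finset.sum_sub_distrib, Finset.sum_sub_distrib, hp.2, hq.2] at h2
  have h3 : ∑ a ∈ U, |p a - q a| ≤ ∑ a ∈ U, (p a + q a) := by
    apply Finset.sum_le_sum
    intro a _
    have := hp.1 a
    have := hq.1 a
    rw [abs_le]
    constructor <;> linarith
  rw [Finset.sum_add_distrib] at h3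
  unfold tvDist
  linarith

lemma sum_avoid {A : Type} [Fintype A] {n : ℕ} (q : A → ℝ) (hq : IsDist q) (U : Finset A) :
    ∑ D : Fin n → A, (if ∀ i, D i ∉ U then wt1 q D else 0) = (1 - ∑ a ∈ U, q a) ^ n := by
  have h1 : (1 - ∑ a ∈ U, q a) = ∑ a ∈ Uᶜ, q a := by
    rw [← hq.2, ← Finset.sum_add_sum_compl U]; ring
  rw [h1, Finset.sum_pow', ← Finset.sum_filter]
  apply Finset.sum_congr
  · ext D; simp
  · intro D _; rfl

lemma sum_wt_s11 {A : Type} [Fintype A] {n : ℕ} (q : A → ℝ) (hq : IsDist q) :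
    ∑ D : Fin n → A, wt1 q D = 1 := by
  have := sum_avoid (n := n) q hq ∅
  simpa using this

lemma main_bound {A : Type} [Fintype A] {n : ℕ} (q : A → ℝ) (hq : IsDist q)
    (est : (Fin n → A) → A → ℝ) (he : ∀ D, IsDist (est D))
    (hm : ∀ D (i : Fin n), est D (D i) = q (D i)) (ε : ℝ) :
    1 - 2 ^ Fintype.card A * Real.exp (-(n * ε)) ≤
      ∑ D : Fin n → A, if tvDist (est D) q ≤ ε then wt1 q D else 0 := by
  have hw : ∀ D : Fin n → A, 0 ≤ wt1 q D := fun D => Finset.prod_nonneg fun i _ => hq.1 _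
  have key : ∀ D : Fin n → A, wt1 q D ≤ (if tvDist (est D) q ≤ ε then wt1 q D else 0) +
      ∑ U : Finset A, (if ε < ∑ a ∈ U, q a then (if ∀ i, D i ∉ U then wt1 q D else 0) else 0) := by
    intro D
    have hnn : ∀ U ∈ (Finset.univ : Finset (Finset A)), 0 ≤ (if ε < ∑ a ∈ U, q a then
        (if ∀ i, D i ∉ U then wt1 q D else 0) else 0) := by
      intro U _
      have := hw D
      split_ifs <;> first | exact this | exact le_rfl
    by_cases hg : tvDist (est D) q ≤ ε
    · rw [if_pos hg]
      linarith [Finset.sum_nonneg hnn]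
    · rw [if_neg hg, zero_add]
      let U : Finset A := Finset.univ.filter fun a => ∀ i, D i ≠ a
      have hU : ε < ∑ a ∈ U, q a := by
        refine lt_of_lt_of_le (not_le.mp hg) (tv_le_missing _ _ (he D) hq U ?_)
        intro a ha
        simp only [U, Finset.mem_filter, Finset.mem_univ, true_and, not_forall, not_not] at ha
        obtain ⟨i, rfl⟩ := ha
        exact hm D i
      have hU2 : ∀ i, D i ∉ U := by
        intro i hi
        exact (Finset.mem_filter.mp hi).2 i rfl
      have := Finset.single_le_sum hnn (Finset.mem_univ U)
      rwa [if_pos hU, if_pos hU2] at this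
  have h1 := Finset.sum_le_sum fun D (_ : D ∈ Finset.univ) => key D
  rw [sum_wt_s11 q hq, Finset.sum_add_distrib, Finset.sum_comm (s := Finset.univ)] at h1
  have h2 : ∑ U : Finset A, ∑ D : Fin n → A, (if ε < ∑ a ∈ U, q a then
      (if ∀ i, D i ∉ U then wt1 q D else 0) else 0) ≤
      ∑ U : Finset A, Real.exp (-(n * ε)) := by
    apply Finset.sum_le_sum
    intro U _
    by_cases hU : ε < ∑ a ∈ U, q a
    · simp only [if_pos hU]
      rw [sum_avoid q hq]
      have h0 : 0 ≤ 1 - ∑ a ∈ U, q a := by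
        rw [← hq.2, sub_nonneg]
        exact Finset.sum_le_sum_of_subset_of_nonneg (Finset.subset_univ _) fun a _ _ => hq.1 a
      have h3 : 1 - ∑ a ∈ U, q a ≤ Real.exp (-ε) := by
        have := Real.add_one_le_exp (-ε)
        linarith
      calc _ ≤ (Real.exp (-ε)) ^ n := pow_le_pow_left₀ h0 h3 n
        _ = _ := by rw [← Real.exp_nat_mul]; ring_nf
    · simp only [if_neg hU, Finset.sum_const_zero]
      positivity
  rw [Finset.sum_const, Finset.card_univ, Fintype.card_finset, nsmul_eq_mul] at h2
  push_cast at h2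
  linarith

/-- high-probability upper bound for any empirical squared error
logit loss minimizer in the single-input case `|S| = 1`. -/
theorem stmt_11 :
    ∃ C : ℝ, 0 < C ∧
      ∀ (A : Type) [Fintype A] [Nonempty A]
        (πs : A → ℝ), IsDist πs →
        ∀ (n : ℕ), 0 < n →
        ∀ (est : (Fin n → A) → A → ℝ),
          (∀ D, IsDist (est D)) →
          (∀ D (i : Fin n), est D (D i) = πs (D i)) →
          ∀ δ : ℝ, 0 < δ → δ ≤ 1 / 10 →
            1 - δ ≤
              ∑ D : Fin n → A,
                if tvDist (est D) πs ≤
                    C * ((Fintype.card A : ℝ) / n +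
                      Real.sqrt (Fintype.card A : ℝ) / n * Real.log (1 / δ))
                  then wt1 πs D else 0 := by
  refine ⟨1, one_pos, ?_⟩
  intro A _ _ πs hπ n hn est he hm δ hδ hδ1
  refine le_trans ?_ (main_bound πs hπ est he hm _)
  have hn' : (n : ℝ) ≠ 0 := by positivity
  have hL : 0 ≤ Real.log (1 / δ) := Real.log_nonneg (by rw [le_div_iff₀ hδ]; linarith)
  have hk : 1 ≤ Real.sqrt (Fintype.card A : ℝ) := by
    rw [Real.one_le_sqrt]
    exact_mod_cast Fintype.card_pos
  have e1 : (n : ℝ) * (1 * ((Fintype.card A : ℝ) / n +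
      Real.sqrt (Fintype.card A : ℝ) / n * Real.log (1 / δ))) =
      Fintype.card A + Real.sqrt (Fintype.card A : ℝ) * Real.log (1 / δ) := by
    field_simp
  rw [e1]
  have e2 : Real.exp (-((Fintype.card A : ℝ) + Real.sqrt (Fintype.card A : ℝ) * Real.log (1 / δ)))
      ≤ Real.exp (-(Fintype.card A : ℝ)) * δ := by
    calc _ ≤ Real.exp (-(Fintype.card A : ℝ) + Real.log δ) := by
          apply Real.exp_le_exp.mpr
          have h := mul_le_mul_of_nonneg_right hk hL
          have h' : Real.log (1 / δ) = - Real.log δ := by rw [one_div, Real.log_inv]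
          rw [h'] at h ⊢
          linarith
      _ = _ := by rw [Real.exp_add, Real.exp_log hδ]
  have e3 : (2 : ℝ) ^ Fintype.card A ≤ Real.exp (Fintype.card A : ℝ) := by
    calc (2 : ℝ) ^ Fintype.card A ≤ (Real.exp 1) ^ Fintype.card A := by
          apply pow_le_pow_left₀ (by norm_num)
          have := Real.add_one_le_exp (1 : ℝ)
          linarith
      _ = _ := by rw [← Real.exp_nat_mul, mul_one]
  have e4 := mul_le_mul e3 e2 (Real.exp_pos _).le (Real.exp_pos _).le
  rw [← mul_assoc, ← Real.exp_add, add_neg_cancel, Real.exp_zero, one_mul] at e4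
  linarith
end

section
/- There is a universal constant C > 0 with the following property. Let S and A be nonempty finite sets, ρ ∈ Δ(S), π* ∈ Δ(A|S), and let D = ((s_1,a_1),…,(s_n,a_n)) be n i.i.d. samples from ρ×π*. Let π̂ ∈ Δ(A|S) be any conditional distribution satisfying π̂(a_i|s_i) = π*(a_i|s_i) for every i ∈ {1,…,n}. Then the expected risk satisfies E[ TV(π̂ ‖ π* | ρ) ] ≤ C·|S||A|/n. -/
open Finset

lemma aux_bern (n : ℕ) (hn : 0 < n) (p : ℝ) (h0 : 0 ≤ p) (h1 : p ≤ 1) :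
    p * (1 - p) ^ n ≤ 1 / n := by
  have hn' : (0 : ℝ) < n := by exact_mod_cast hn
  rw [le_div_iff₀ hn']
  have hb : 1 + (n : ℝ) * p ≤ (1 + p) ^ n := one_add_mul_le_pow (by linarith) n
  have hq : 0 ≤ (1 - p) ^ n := pow_nonneg (by linarith) n
  have h2 : (1 + p) ^ n * (1 - p) ^ n ≤ 1 := by
    rw [← mul_pow]
    exact pow_le_one₀ (by nlinarith) (by nlinarith)
  nlinarith [mul_le_mul_of_nonneg_right hb hq]


lemma aux_unseen {X : Type} [Fintype X] [DecidableEq X] (p : X → ℝ) (hp : ∑ x, p x = 1) (n : ℕ) (x : X) :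
    ∑ D : Fin n → X, (∏ i, p (D i)) * (if ∃ i, D i = x then 0 else 1) = (1 - p x) ^ n := by
  have h1 : 1 - p x = ∑ y, if y = x then 0 else p y := by
    have : ∀ y, (if y = x then 0 else p y) = p y - if y = x then p y else 0 := by
      intro y; split_ifs <;> simp
    simp [this, hp]
  rw [h1, Fintype.sum_pow]
  refine Finset.sum_congr rfl fun D _ => ?_
  by_cases h : ∃ i, D i = x
  · rw [if_pos h, mul_zero]
    obtain ⟨i, hi⟩ := h
    exact (Finset.prod_eq_zero (Finset.mem_univ i) (by simp [hi])).symm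
  · rw [if_neg h, mul_one]
    push Not at h
    exact Finset.prod_congr rfl fun i _ => by simp [h i]


lemma aux_tv_s12 {S A : Type} [Fintype S] [Fintype A] (ρ : S → ℝ) (π e : S → A → ℝ)
    (hρ : IsDist ρ) (hπ : IsCondDist π) (he : IsCondDist e) (P : S × A → Prop) [DecidablePred P]
    (h : ∀ x, P x → e x.1 x.2 = π x.1 x.2) :
    condTV ρ e π ≤ ∑ x : S × A, ρ x.1 * π x.1 x.2 * (if P x then 0 else 1) := by
  rw [Fintype.sum_prod_type]
  unfold condTV
  refine Finset.sum_le_sum fun s _ => ?_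
  have : ∑ a, |e s a - π s a| ≤ ∑ a, (e s a - π s a + 2 * (π s a * if P (s, a) then 0 else 1)) := by
    refine Finset.sum_le_sum fun a _ => ?_
    have h1 := (he s).1 a
    have h2 := (hπ s).1 a
    split_ifs with hP
    · have := h _ hP
      simp at this
      simp [this]
    · rw [abs_le]; constructor <;> linarith
  rw [Finset.sum_add_distrib, Finset.sum_sub_distrib, (he s).2, (hπ s).2, ← Finset.mul_sum] at this
  simp only [mul_assoc]
  rw [← Finset.mul_sum]
  exact mul_le_mul_of_nonneg_left (by linarith) (hρ.1 s)

/-- expected-risk upper bound `C·|S||A|/n` for any empirical squared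
error logit loss minimizer (a learner matching the teacher probability on every
sampled pair). -/
theorem stmt_12 :
    ∃ C : ℝ, 0 < C ∧
      ∀ (S A : Type) [Fintype S] [Fintype A] [Nonempty S] [Nonempty A]
        (ρ : S → ℝ) (πs : S → A → ℝ), IsDist ρ → IsCondDist πs →
        ∀ (n : ℕ), 0 < n →
        ∀ (est : (Fin n → S × A) → S → A → ℝ),
          (∀ D, IsCondDist (est D)) →
          (∀ D (i : Fin n), est D (D i).1 (D i).2 = πs (D i).1 (D i).2) →
          ∑ D : Fin n → S × A, wt ρ πs D * condTV ρ (est D) πs ≤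
            C * (Fintype.card S * Fintype.card A : ℝ) / n := by
  classical
  refine ⟨1, one_pos, ?_⟩
  intro S A _ _ _ _ ρ πs hρ hπ n hn est hest hmatch
  set p : S × A → ℝ := fun x => ρ x.1 * πs x.1 x.2 with hpdef
  have hp0 : ∀ x, 0 ≤ p x := fun x => mul_nonneg (hρ.1 _) ((hπ _).1 _)
  have hp1 : ∑ x, p x = 1 := by
    rw [Fintype.sum_prod_type]
    simp only [hpdef, ← Finset.mul_sum]
    simp [fun s => (hπ s).2, hρ.2]
  have hple : ∀ x, p x ≤ 1 := fun x => by
    rw [← hp1]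
    exact Finset.single_le_sum (fun y _ => hp0 y) (Finset.mem_univ x)
  have hw : ∀ D : Fin n → S × A, 0 ≤ wt ρ πs D := fun D =>
    Finset.prod_nonneg fun i _ => hp0 (D i)
  calc ∑ D : Fin n → S × A, wt ρ πs D * condTV ρ (est D) πs
      ≤ ∑ D : Fin n → S × A, wt ρ πs D *
          ∑ x, p x * (if ∃ i, D i = x then 0 else 1) := by
        refine Finset.sum_le_sum fun D _ => mul_le_mul_of_nonneg_left ?_ (hw D)
        refine aux_tv_s12 ρ πs (est D) hρ hπ (hest D) (fun x => ∃ i, D i = x) ?_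
        rintro x ⟨i, rfl⟩
        exact hmatch D i
    _ = ∑ x, p x * (1 - p x) ^ n := by
        simp only [Finset.mul_sum]
        rw [Finset.sum_comm]
        refine Finset.sum_congr rfl fun x _ => ?_
        rw [← aux_unseen p hp1 n x, Finset.mul_sum]
        refine Finset.sum_congr rfl fun D _ => ?_
        simp only [wt, hpdef]
        ring
    _ ≤ ∑ x : S × A, (1 / n : ℝ) :=
        Finset.sum_le_sum fun x _ => aux_bern n hn _ (hp0 x) (hple x)
    _ = 1 * (Fintype.card S * Fintype.card A : ℝ) / n := by
        simp [Fintype.card_prod, div_eq_mul_inv]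
end

section
/- Let S and A be nonempty finite sets, ρ ∈ Δ(S), π* ∈ Δ(A|S), and let D = ((s_1,a_1),…,(s_n,a_n)) be n i.i.d. samples from ρ×π*. Let π̂ ∈ Δ(A|S) be any conditional distribution satisfying π̂(·|s) = π*(·|s) for every s appearing among s_1,…,s_n. Then for every δ ∈ (0, 1/10], with probability at least 1 − δ, TV(π̂ ‖ π* | ρ) ≤ 4|S|/(9n) + 3·√|S|·log(1/δ)/n. -/
open Finset

open scoped Classical

/-- indicator that `s` is not visited by `D` -/
noncomputable def unseen {S A : Type} {n : ℕ} (D : Fin n → S × A) (s : S) : ℝ :=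
  if ∃ i : Fin n, (D i).1 = s then 0 else 1

lemma unseen_prod {S A : Type} {n : ℕ} (D : Fin n → S × A) (T : Finset S) :
    ∏ s ∈ T, unseen D s = ∏ i, (if (D i).1 ∈ T then (0 : ℝ) else 1) := by
  by_cases h : ∃ i, (D i).1 ∈ T
  · obtain ⟨i, hi⟩ := h
    rw [Finset.prod_eq_zero hi (by simp [unseen]), Finset.prod_eq_zero (Finset.mem_univ i)]
    simp [hi]
  · push Not at h
    rw [Finset.prod_eq_one, Finset.prod_eq_one]
    · intro i _; simp [h i]
    · intro s hs
      unfold unseen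
      rw [if_neg]
      rintro ⟨i, rfl⟩
      exact h i hs

lemma wt_unseen {S A : Type} [Fintype S] [Fintype A] {n : ℕ}
    (ρ : S → ℝ) (πs : S → A → ℝ) (hρ : IsDist ρ) (hπs : IsCondDist πs) (T : Finset S) :
    ∑ D : Fin n → S × A, wt ρ πs D * ∏ s ∈ T, unseen D s = (1 - ∑ s ∈ T, ρ s) ^ n := by
  have h1 : (1 - ∑ s ∈ T, ρ s) =
      ∑ x : S × A, ρ x.1 * πs x.1 x.2 * (if x.1 ∈ T then (0 : ℝ) else 1) := by
    rw [Fintype.sum_prod_type]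
    have : ∀ s, ∑ a, ρ s * πs s a * (if s ∈ T then (0 : ℝ) else 1)
        = ρ s - if s ∈ T then ρ s else 0 := by
      intro s
      rw [← Finset.sum_mul, ← Finset.mul_sum, (hπs s).2]
      split_ifs <;> simp
    simp only [this]
    rw [Finset.sum_sub_distrib, hρ.2]
    simp
  rw [h1, Fintype.sum_pow]
  refine Finset.sum_congr rfl fun D _ => ?_
  rw [unseen_prod, wt, ← Finset.prod_mul_distrib]

lemma mgf_bound {S A : Type} [Fintype S] [Fintype A] {n : ℕ}
    (ρ : S → ℝ) (πs : S → A → ℝ) (hρ : IsDist ρ) (hπs : IsCondDist πs)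
    (c : S → ℝ) (hc : ∀ s, 0 ≤ c s) :
    ∑ D : Fin n → S × A, wt ρ πs D * ∏ s, (1 + c s * unseen D s)
      ≤ ∏ s, (1 + c s * Real.exp (-(n * ρ s))) := by
  simp only [Finset.prod_one_add, Finset.mul_sum]
  rw [Finset.sum_comm]
  refine Finset.sum_le_sum fun T _ => ?_
  have : ∀ D : Fin n → S × A, wt ρ πs D * ∏ s ∈ T, c s * unseen D s
      = (∏ s ∈ T, c s) * (wt ρ πs D * ∏ s ∈ T, unseen D s) := by
    intro D; rw [Finset.prod_mul_distrib]; ring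
  simp only [this]
  rw [← Finset.mul_sum, wt_unseen ρ πs hρ hπs, Finset.prod_mul_distrib]
  refine mul_le_mul_of_nonneg_left ?_ (Finset.prod_nonneg fun s _ => hc s)
  rw [← Real.exp_sum, Finset.sum_neg_distrib, ← Finset.mul_sum, ← mul_neg, Real.exp_nat_mul]
  have hle : ∑ s ∈ T, ρ s ≤ 1 := by
    rw [← hρ.2]
    exact Finset.sum_le_sum_of_subset_of_nonneg (Finset.subset_univ _) fun s _ _ => hρ.1 s
  refine pow_le_pow_left₀ (by linarith) ?_ _
  have := Real.add_one_le_exp (-∑ s ∈ T, ρ s)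
  linarith

lemma factor_bound (x t : ℝ) (ht0 : 0 ≤ t) (ht : t ≤ 1 / 3) :
    (Real.exp (t * x) - 1) * Real.exp (-x) ≤ 4 * t / 9 := by
  have hconv := convexOn_exp.2 (Set.mem_univ (0 : ℝ)) (Set.mem_univ (x / 3))
    (show 0 ≤ 1 - 3 * t by linarith) (show 0 ≤ 3 * t by linarith) (by ring)
  simp only [smul_eq_mul, mul_zero, zero_add, Real.exp_zero, mul_one] at hconv
  rw [show 3 * t * (x / 3) = t * x by ring] at hconv
  have h1 : Real.exp (t * x) - 1 ≤ 3 * t * (Real.exp (x / 3) - 1) := by linarith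
  have h2 := mul_le_mul_of_nonneg_right h1 (Real.exp_pos (-x)).le
  set u := Real.exp (-(x / 3)) with hu
  have hupos : 0 < u := Real.exp_pos _
  have h3 : Real.exp (-x) = u ^ 3 := by
    rw [hu, ← Real.exp_nat_mul]; congr 1; push_cast; ring
  have h4 : Real.exp (x / 3) * u = 1 := by rw [hu, ← Real.exp_add]; simp
  have h5 : (Real.exp (x / 3) - 1) * Real.exp (-x) = u ^ 2 - u ^ 3 := by
    rw [h3]; linear_combination u ^ 2 * h4
  have h6 : u ^ 2 - u ^ 3 ≤ 4 / 27 := by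
    nlinarith [mul_nonneg (sq_nonneg (u - 2 / 3)) (show 0 ≤ u + 1 / 3 by linarith)]
  calc _ ≤ 3 * t * (Real.exp (x / 3) - 1) * Real.exp (-x) := h2
    _ = 3 * t * (u ^ 2 - u ^ 3) := by rw [mul_assoc, h5]
    _ ≤ 3 * t * (4 / 27) := mul_le_mul_of_nonneg_left h6 (by linarith)
    _ = _ := by ring

lemma condTV_le {S A : Type} [Fintype S] [Fintype A] {n : ℕ}
    (ρ : S → ℝ) (πs e : S → A → ℝ) (hρ : IsDist ρ) (hπs : IsCondDist πs)
    (he : IsCondDist e) (D : Fin n → S × A)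
    (hmatch : ∀ s, (∃ i : Fin n, (D i).1 = s) → ∀ a, e s a = πs s a) :
    condTV ρ e πs ≤ ∑ s, ρ s * unseen D s := by
  unfold condTV
  refine Finset.sum_le_sum fun s _ => mul_le_mul_of_nonneg_left ?_ (hρ.1 s)
  unfold unseen
  split_ifs with h
  · simp [hmatch s h]
  · have : ∑ a, |e s a - πs s a| ≤ ∑ a, (e s a + πs s a) := by
      refine Finset.sum_le_sum fun a _ => ?_
      have h1 := (he s).1 a
      have h2 := (hπs s).1 a
      rw [abs_le]; constructor <;> linarith
    rw [Finset.sum_add_distrib, (he s).2, (hπs s).2] at this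
    linarith

/-- high-probability upper bound for any learner matching the full
teacher distribution `π*(·|s)` at every visited input `s` (a KL minimizer with
full soft labels). -/
theorem stmt_13 (S A : Type) [Fintype S] [Fintype A] [Nonempty S] [Nonempty A]
    (ρ : S → ℝ) (πs : S → A → ℝ) (hρ : IsDist ρ) (hπs : IsCondDist πs)
    (n : ℕ) (hn : 0 < n)
    (est : (Fin n → S × A) → S → A → ℝ)
    (hest : ∀ D, IsCondDist (est D))
    (hmatch : ∀ D s, (∃ i : Fin n, (D i).1 = s) → ∀ a, est D s a = πs s a)
    (δ : ℝ) (hδ0 : 0 < δ) (hδ1 : δ ≤ 1 / 10) :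
    1 - δ ≤
      ∑ D : Fin n → S × A,
        if condTV ρ (est D) πs ≤
            4 * (Fintype.card S : ℝ) / (9 * n) +
            3 * Real.sqrt (Fintype.card S : ℝ) * Real.log (1 / δ) / n
          then wt ρ πs D else 0 := by
  set k : ℝ := (Fintype.card S : ℝ) with hk
  have hk1 : 1 ≤ k := by
    rw [hk]; exact_mod_cast Fintype.card_pos
  have hs1 : 1 ≤ Real.sqrt k := Real.one_le_sqrt.mpr hk1
  have hnpos : (0 : ℝ) < n := by exact_mod_cast hn
  set B := 4 * k / (9 * n) + 3 * Real.sqrt k * Real.log (1 / δ) / n with hB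
  set t : ℝ := 1 / (3 * Real.sqrt k) with ht
  have ht0 : 0 < t := by positivity
  have ht3 : t ≤ 1 / 3 := by
    rw [ht]; exact one_div_le_one_div_of_le (by norm_num) (by linarith)
  have hlam : t * n * B = k * (4 * t / 9) - Real.log δ := by
    have h3 : t * (3 * Real.sqrt k) = 1 := by rw [ht]; field_simp
    have : n * B = 4 * k / 9 + 3 * Real.sqrt k * Real.log (1 / δ) := by
      rw [hB]; field_simp
    rw [mul_assoc, this, one_div, Real.log_inv]
    linear_combination (-Real.log δ) * h3
  have hw : ∀ D : Fin n → S × A, 0 ≤ wt ρ πs D := fun D =>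
    Finset.prod_nonneg fun i _ => mul_nonneg (hρ.1 _) ((hπs _).1 _)
  have htot : ∑ D : Fin n → S × A, wt ρ πs D = 1 := by
    simpa using wt_unseen (n := n) ρ πs hρ hπs ∅
  let c : S → ℝ := fun s => Real.exp (t * (n * ρ s)) - 1
  have hc : ∀ s, 0 ≤ c s := fun s => by
    have : 0 ≤ t * (n * ρ s) := mul_nonneg ht0.le (mul_nonneg hnpos.le (hρ.1 s))
    have := Real.one_le_exp this
    simp only [c]; linarith
  have hM : ∀ D : Fin n → S × A, Real.exp (t * n * ∑ s, ρ s * unseen D s)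
      = ∏ s, (1 + c s * unseen D s) := by
    intro D
    rw [Finset.mul_sum, Real.exp_sum]
    refine Finset.prod_congr rfl fun s _ => ?_
    unfold unseen
    split_ifs
    · simp
    · simp only [c, mul_one]
      rw [mul_assoc]; ring
  have hmgf : ∑ D : Fin n → S × A, wt ρ πs D * Real.exp (t * n * ∑ s, ρ s * unseen D s)
      ≤ Real.exp (k * (4 * t / 9)) := by
    simp only [hM]
    refine (mgf_bound ρ πs hρ hπs c hc).trans ?_
    calc ∏ s, (1 + c s * Real.exp (-(n * ρ s)))
        ≤ ∏ _s : S, Real.exp (4 * t / 9) := by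
          refine Finset.prod_le_prod (fun s _ => ?_) fun s _ => ?_
          · have := mul_nonneg (hc s) (Real.exp_pos (-(n * ρ s))).le
            linarith
          · have h1 := factor_bound (n * ρ s) t ht0.le ht3
            have h2 := Real.add_one_le_exp (4 * t / 9)
            simp only [c]; linarith
      _ = _ := by
          rw [Finset.prod_const, Finset.card_univ, hk, Real.exp_nat_mul]
  have hstep : ∀ D : Fin n → S × A,
      wt ρ πs D - wt ρ πs D * Real.exp (t * n * ∑ s, ρ s * unseen D s) * Real.exp (-(t * n * B))
      ≤ if condTV ρ (est D) πs ≤ B then wt ρ πs D else 0 := by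
    intro D
    split_ifs with h
    · have := mul_nonneg (mul_nonneg (hw D)
        (Real.exp_pos (t * n * ∑ s, ρ s * unseen D s)).le) (Real.exp_pos (-(t * n * B))).le
      linarith
    · push Not at h
      have h1 := h.trans_le (condTV_le ρ πs (est D) hρ hπs (hest D) D (hmatch D))
      rw [mul_assoc, ← Real.exp_add]
      have h2 : 1 ≤ Real.exp (t * n * ∑ s, ρ s * unseen D s + -(t * n * B)) := by
        apply Real.one_le_exp
        have := mul_le_mul_of_nonneg_left h1.le (mul_pos ht0 hnpos).le
        linarith
      have := mul_le_mul_of_nonneg_left h2 (hw D)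
      linarith
  refine le_trans ?_ (Finset.sum_le_sum fun D _ => hstep D)
  rw [Finset.sum_sub_distrib, htot, ← Finset.sum_mul]
  have h1 := mul_le_mul_of_nonneg_right hmgf (Real.exp_pos (-(t * n * B))).le
  have h2 : Real.exp (k * (4 * t / 9)) * Real.exp (-(t * n * B)) = δ := by
    rw [← Real.exp_add, hlam]
    rw [show k * (4 * t / 9) + -(k * (4 * t / 9) - Real.log δ) = Real.log δ by ring]
    exact Real.exp_log hδ0
  linarith
end

section
/- Let S and A be nonempty finite sets, ρ ∈ Δ(S), π* ∈ Δ(A|S), and let D = ((s_1,a_1),…,(s_n,a_n)) be n i.i.d. samples from ρ×π*. Let π̂ ∈ Δ(A|S) be any conditional distribution satisfying π̂(·|s) = π*(·|s) for every s appearing among s_1,…,s_n. Then the expected risk satisfies E[ TV(π̂ ‖ π* | ρ) ] ≤ 4|S|/(9n). -/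
open Finset

lemma aux_bound (n : ℕ) (hn : 0 < n) (x : ℝ) (hx : 0 ≤ x) (hx1 : x ≤ 1) :
    x * (1 - x) ^ n ≤ 4 / (9 * n) := by
  have hn' : (0 : ℝ) < n := by exact_mod_cast hn
  have h1 : (1 - x) ^ n ≤ Real.exp (-(n * x)) := by
    have h : 1 - x ≤ Real.exp (-x) := Real.one_sub_le_exp_neg x
    calc (1 - x) ^ n ≤ Real.exp (-x) ^ n := pow_le_pow_left₀ (by linarith) h n
      _ = Real.exp (-(n * x)) := by rw [← Real.exp_nat_mul]; ring_nf
  have h2 : (n * x) * Real.exp (-(n * x)) ≤ Real.exp (-1) := by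
    have h : (n * x - 1) + 1 ≤ Real.exp (n * x - 1) := Real.add_one_le_exp _
    calc (n * x) * Real.exp (-(n * x)) ≤ Real.exp (n * x - 1) * Real.exp (-(n * x)) :=
          mul_le_mul_of_nonneg_right (by linarith) (Real.exp_pos _).le
      _ = Real.exp (-1) := by rw [← Real.exp_add]; ring_nf
  have h3 : Real.exp (-1) ≤ 4 / 9 := by
    have := Real.exp_neg_one_lt_d9
    linarith
  have h4 : x * (1 - x) ^ n ≤ x * Real.exp (-(n * x)) := mul_le_mul_of_nonneg_left h1 hx
  rw [le_div_iff₀ (by positivity)]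
  nlinarith

lemma tv_le_one {A : Type} [Fintype A] (p q : A → ℝ) (hp : IsDist p) (hq : IsDist q) :
    (1 / 2) * ∑ a, |p a - q a| ≤ 1 := by
  have : ∑ a, |p a - q a| ≤ ∑ a, (p a + q a) := by
    refine Finset.sum_le_sum fun a _ => ?_
    have := hp.1 a
    have := hq.1 a
    rw [abs_le]; constructor <;> linarith
  rw [Finset.sum_add_distrib, hp.2, hq.2] at this
  linarith

open Classical in
lemma miss_prob (S A : Type) [Fintype S] [Fintype A]
    (ρ : S → ℝ) (πs : S → A → ℝ) (hρ : IsDist ρ) (hπs : IsCondDist πs) (n : ℕ) (s : S) :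
    ∑ D : Fin n → S × A, ∏ i, (if (D i).1 = s then 0 else ρ (D i).1 * πs (D i).1 (D i).2)
      = (1 - ρ s) ^ n := by
  have h := Fintype.sum_pow
    (fun z : S × A => if z.1 = s then 0 else ρ z.1 * πs z.1 z.2) n
  rw [← h]
  congr 1
  rw [Fintype.sum_prod_type]
  have : ∀ x : S, ∑ y : A, (if x = s then 0 else ρ x * πs x y)
      = ρ x - (if x = s then ρ x else 0) := by
    intro x
    split_ifs
    · simp
    · rw [← Finset.mul_sum, (hπs x).2]; simp
  simp only [this]
  rw [Finset.sum_sub_distrib, hρ.2]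
  simp

/-- expected-risk upper bound `4|S|/(9n)` for any learner matching
the full teacher distribution `π*(·|s)` at every visited input `s`. -/
theorem stmt_14 (S A : Type) [Fintype S] [Fintype A] [Nonempty S] [Nonempty A]
    (ρ : S → ℝ) (πs : S → A → ℝ) (hρ : IsDist ρ) (hπs : IsCondDist πs)
    (n : ℕ) (hn : 0 < n)
    (est : (Fin n → S × A) → S → A → ℝ)
    (hest : ∀ D, IsCondDist (est D))
    (hmatch : ∀ D s, (∃ i : Fin n, (D i).1 = s) → ∀ a, est D s a = πs s a) :
    ∑ D : Fin n → S × A, wt ρ πs D * condTV ρ (est D) πs ≤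
      4 * (Fintype.card S : ℝ) / (9 * n) := by
  classical
  have hρ1 : ∀ s, ρ s ≤ 1 := fun s => by
    rw [← hρ.2]
    exact Finset.single_le_sum (fun i _ => hρ.1 i) (Finset.mem_univ s)
  have key : ∀ D : Fin n → S × A, wt ρ πs D * condTV ρ (est D) πs ≤
      ∑ s, ρ s * ∏ i, (if (D i).1 = s then 0 else ρ (D i).1 * πs (D i).1 (D i).2) := by
    intro D
    have hw : 0 ≤ wt ρ πs D :=
      Finset.prod_nonneg fun i _ => mul_nonneg (hρ.1 _) ((hπs _).1 _)
    unfold condTV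
    rw [Finset.mul_sum]
    refine Finset.sum_le_sum fun s _ => ?_
    by_cases hs : ∃ i, (D i).1 = s
    · have h0 : ∑ a, |est D s a - πs s a| = 0 :=
        Finset.sum_eq_zero fun a _ => by rw [hmatch D s hs a]; simp
      rw [h0]
      obtain ⟨i, hi⟩ := hs
      rw [Finset.prod_eq_zero (Finset.mem_univ i) (by simp [hi])]
      simp
    · push Not at hs
      have : ∏ i, (if (D i).1 = s then 0 else ρ (D i).1 * πs (D i).1 (D i).2) = wt ρ πs D :=
        Finset.prod_congr rfl fun i _ => by rw [if_neg (hs i)]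
      rw [this]
      have h1 := tv_le_one _ _ (hest D s) (hπs s)
      calc _ ≤ wt ρ πs D * (ρ s * 1) :=
            mul_le_mul_of_nonneg_left (mul_le_mul_of_nonneg_left h1 (hρ.1 s)) hw
        _ = _ := by ring
  calc _ ≤ _ := Finset.sum_le_sum fun D _ => key D
    _ = ∑ s, ρ s * (1 - ρ s) ^ n := by
      rw [Finset.sum_comm]
      refine Finset.sum_congr rfl fun s _ => ?_
      rw [← Finset.mul_sum, miss_prob S A ρ πs hρ hπs n s]
    _ ≤ ∑ _s : S, (4 / (9 * n) : ℝ) :=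
      Finset.sum_le_sum fun s _ => aux_bound n hn _ (hρ.1 s) (hρ1 s)
    _ = _ := by simp; ring
end

section
/- Let X be a measurable space, Y a nonempty finite set, d a positive integer, and φ : X × Y → ℝ^d a measurable feature map with sup_{(x,y)} ‖φ(x,y)‖₂ ≤ M. For θ ∈ ℝ^d define the log-linear (softmax) conditional distribution π_θ(y|x) := exp(⟨φ(x,y), θ⟩) / Σ_{k∈Y} exp(⟨φ(x,k), θ⟩). Then for any two parameters θ, θ′ ∈ ℝ^d and any probability measure ν on X, ∫_X TV( π_θ(·|x), π_{θ′}(·|x) ) dν(x) ≤ M·‖θ − θ′‖₂, where TV(p,q) := (1/2)·Σ_{y∈Y} |p(y) − q(y)|. -/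
open Finset MeasureTheory

open scoped RealInnerProductSpace

/-- The log-linear (softmax) conditional distribution induced by a feature map
`φ` and a parameter `θ`. -/
noncomputable def softmaxPolicy {X Y : Type} [Fintype Y] {d : ℕ}
    (φ : X × Y → EuclideanSpace ℝ (Fin d)) (θ : EuclideanSpace ℝ (Fin d))
    (x : X) (y : Y) : ℝ :=
  Real.exp ⟪φ (x, y), θ⟫ / ∑ k, Real.exp ⟪φ (x, k), θ⟫

/-- Pointwise `ℓ¹` bound between two softmax vectors. -/
theorem softmax_l1_aux {Y : Type} [Fintype Y] [Nonempty Y] (a b : Y → ℝ) (D : ℝ)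
    (h : ∀ y, |a y - b y| ≤ D) :
    ∑ y, |Real.exp (a y) / ∑ k, Real.exp (a k) - Real.exp (b y) / ∑ k, Real.exp (b k)|
      ≤ 2 * D := by
  set c : Y → ℝ := fun y => a y - b y with hc
  set Z : ℝ → ℝ := fun t => ∑ k, Real.exp (b k + t * c k) with hZ
  set s : Y → ℝ := fun y => SignType.sign
    (Real.exp (a y) / ∑ k, Real.exp (a k) - Real.exp (b y) / ∑ k, Real.exp (b k)) with hs
  have hs1 : ∀ y, |s y| ≤ 1 := by
    intro y
    have hr : ∀ r : SignType, |(r : ℝ)| ≤ 1 := by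
      intro r
      cases r <;> simp
    exact hr _
  have hZpos : ∀ t, 0 < Z t := fun t =>
    Finset.sum_pos (fun k _ => Real.exp_pos _) Finset.univ_nonempty
  have he : ∀ y t, HasDerivAt (fun t => Real.exp (b y + t * c y))
      (Real.exp (b y + t * c y) * c y) t := by
    intro y t
    have := (((hasDerivAt_id t).mul_const (c y)).const_add (b y)).exp
    simpa using this
  have hZd : ∀ t, HasDerivAt Z (∑ k, Real.exp (b k + t * c k) * c k) t := by
    intro t
    exact HasDerivAt.fun_sum (fun k _ => he k t)
  have hfd : ∀ t, HasDerivAt (fun t => ∑ y, s y * (Real.exp (b y + t * c y) / Z t))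
      (∑ y, s y * ((Real.exp (b y + t * c y) * c y * Z t
        - Real.exp (b y + t * c y) * ∑ k, Real.exp (b k + t * c k) * c k) / Z t ^ 2)) t := by
    intro t
    exact HasDerivAt.fun_sum (fun y _ => ((he y t).div (hZd t) (hZpos t).ne').const_mul (s y))
  have hW : ∀ t, |∑ k, Real.exp (b k + t * c k) * c k| ≤ Z t * D := by
    intro t
    refine (Finset.abs_sum_le_sum_abs _ _).trans ?_
    rw [hZ, Finset.sum_mul]
    refine Finset.sum_le_sum fun k _ => ?_
    rw [abs_mul, Real.abs_exp]
    exact mul_le_mul_of_nonneg_left (h k) (Real.exp_pos _).le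
  have hbound : ∀ t, ‖∑ y, s y * ((Real.exp (b y + t * c y) * c y * Z t
        - Real.exp (b y + t * c y) * ∑ k, Real.exp (b k + t * c k) * c k) / Z t ^ 2)‖
        ≤ 2 * D := by
    intro t
    rw [Real.norm_eq_abs]
    refine (Finset.abs_sum_le_sum_abs _ _).trans ?_
    have hz := hZpos t
    have key : ∀ y, |s y * ((Real.exp (b y + t * c y) * c y * Z t
        - Real.exp (b y + t * c y) * ∑ k, Real.exp (b k + t * c k) * c k) / Z t ^ 2)|
        ≤ Real.exp (b y + t * c y) * (2 * D / Z t) := by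
      intro y
      have hE := Real.exp_pos (b y + t * c y)
      rw [abs_mul]
      refine (mul_le_of_le_one_left (abs_nonneg _) (hs1 y)).trans ?_
      rw [abs_div, abs_of_pos (pow_pos hz 2), mul_assoc, ← mul_sub, abs_mul, Real.abs_exp,
        mul_div_assoc]
      refine mul_le_mul_of_nonneg_left ?_ hE.le
      rw [div_le_div_iff₀ (pow_pos hz 2) hz]
      have h1 : |c y * Z t - ∑ k, Real.exp (b k + t * c k) * c k| ≤ 2 * D * Z t := by
        refine (abs_sub _ _).trans ?_
        rw [abs_mul, abs_of_pos hz]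
        have := mul_le_mul_of_nonneg_right (h y) hz.le
        have h2 := hW t
        simp only [hc] at *
        linarith
      calc _ ≤ (2 * D * Z t) * Z t := mul_le_mul_of_nonneg_right h1 hz.le
        _ = _ := by ring
    refine (Finset.sum_le_sum fun y _ => key y).trans ?_
    rw [← Finset.sum_mul]
    change Z t * _ ≤ _
    rw [mul_div_cancel₀ _ hz.ne']
  have := norm_image_sub_le_of_norm_deriv_le_segment_01'
    (fun t _ => (hfd t).hasDerivWithinAt) (fun t _ => hbound t)
  refine le_trans (le_of_eq ?_) ((le_abs_self _).trans this)
  rw [← Finset.sum_sub_distrib]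
  refine Finset.sum_congr rfl fun y _ => ?_
  rw [← mul_sub]
  simp only [hZ, hc, one_mul, zero_mul, add_zero, add_sub_cancel, hs]
  exact (sign_mul_self _).symm

/-- for log-linear conditional distributions with features bounded
by `M` in Euclidean norm, the expected total variation between the policies of
two parameters is at most `M·‖θ − θ′‖₂`. -/
theorem stmt_15 (X : Type) [MeasurableSpace X] (Y : Type) [Fintype Y] [Nonempty Y]
    (d : ℕ) (hd : 0 < d)
    (φ : X × Y → EuclideanSpace ℝ (Fin d))
    (hφmeas : ∀ y, Measurable fun x => φ (x, y))
    (M : ℝ) (hM : ∀ x y, ‖φ (x, y)‖ ≤ M)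
    (θ θ' : EuclideanSpace ℝ (Fin d))
    (ν : Measure X) [IsProbabilityMeasure ν] :
    ∫ x, (1 / 2) * ∑ y, |softmaxPolicy φ θ x y - softmaxPolicy φ θ' x y| ∂ν ≤
      M * ‖θ - θ'‖ := by
  have hp : ∀ x, (1 / 2) * ∑ y, |softmaxPolicy φ θ x y - softmaxPolicy φ θ' x y|
      ≤ M * ‖θ - θ'‖ := by
    intro x
    have := softmax_l1_aux (fun y => ⟪φ (x, y), θ⟫) (fun y => ⟪φ (x, y), θ'⟫) (M * ‖θ - θ'‖) (by
      intro y
      rw [← inner_sub_right]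
      exact (abs_real_inner_le_norm _ _).trans
        (mul_le_mul_of_nonneg_right (hM x y) (norm_nonneg _)))
    unfold softmaxPolicy
    linarith
  have := integral_mono_of_nonneg (μ := ν)
    (f := fun x => (1 / 2) * ∑ y, |softmaxPolicy φ θ x y - softmaxPolicy φ θ' x y|)
    (g := fun _ => M * ‖θ - θ'‖)
    (Filter.Eventually.of_forall fun x => by
      show (0 : ℝ) ≤ _
      positivity)
    (integrable_const _) (Filter.Eventually.of_forall hp)
  simpa using this
end

section
/- Let A be a nonempty finite set, π a probability distribution on A, and a_1,…,a_n i.i.d. samples from π. Let π̂ denote the empirical distribution π̂(a) := (1/n)·Σ_{i=1}^n 1{a_i = a}. Then E[ TV(π̂, π) ] ≤ (1/2)·√(|A|/n), where TV(p,q) := (1/2)·Σ_{a∈A} |p(a) − q(a)|. -/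
open Finset

/-- The empirical distribution `π̂(a) = (1/n)·Σ_i 1{a_i = a}` of a sample. -/
noncomputable def empDist {A : Type} [DecidableEq A] {n : ℕ} (D : Fin n → A)
    (a : A) : ℝ :=
  ((univ.filter fun i => D i = a).card : ℝ) / n

theorem moments_aux_s17 {A : Type} [Fintype A] (π f : A → ℝ) (h1 : ∑ a, π a = 1)
    (h0 : ∑ a, π a * f a = 0) (n : ℕ) :
    (∑ D : Fin n → A, wt1 π D = 1) ∧
    (∑ D : Fin n → A, wt1 π D * ∑ i, f (D i) = 0) ∧
    (∑ D : Fin n → A, wt1 π D * (∑ i, f (D i)) ^ 2 = n * ∑ a, π a * f a ^ 2) := by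
  induction n with
  | zero => simp [wt1]
  | succ n ih =>
    obtain ⟨i0, i1, i2⟩ := ih
    have key : ∀ G : (Fin (n + 1) → A) → ℝ, ∑ D, G D =
        ∑ a, ∑ D : Fin n → A, G (Fin.cons a D) := by
      intro G
      rw [← (Fin.consEquiv (fun _ => A)).sum_comp, Fintype.sum_prod_type]
      rfl
    have hw : ∀ (a : A) (D : Fin n → A),
        wt1 π (Fin.cons a D : Fin (n + 1) → A) = π a * wt1 π D := by
      intro a D
      simp [wt1, Fin.prod_univ_succ]
    refine ⟨?_, ?_, ?_⟩
    · rw [key]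
      simp only [hw, ← mul_sum, i0, mul_one, h1]
    · rw [key]
      simp only [hw, Fin.sum_univ_succ, Fin.cons_zero, Fin.cons_succ]
      have : ∀ a, ∑ D : Fin n → A, π a * wt1 π D * (f a + ∑ i, f (D i)) = π a * f a := by
        intro a
        calc _ = π a * f a * ∑ D : Fin n → A, wt1 π D
              + π a * ∑ D : Fin n → A, wt1 π D * ∑ i, f (D i) := by
              rw [mul_sum, mul_sum, ← sum_add_distrib]
              exact sum_congr rfl fun D _ => by ring
          _ = _ := by rw [i0, i1]; ring
      simp only [this, h0]
    · rw [key]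
      simp only [hw, Fin.sum_univ_succ, Fin.cons_zero, Fin.cons_succ]
      have : ∀ a, ∑ D : Fin n → A, π a * wt1 π D * (f a + ∑ i, f (D i)) ^ 2
          = π a * f a ^ 2 + π a * (n * ∑ a, π a * f a ^ 2) := by
        intro a
        calc _ = π a * f a ^ 2 * ∑ D : Fin n → A, wt1 π D
              + 2 * π a * f a * ∑ D : Fin n → A, wt1 π D * ∑ i, f (D i)
              + π a * ∑ D : Fin n → A, wt1 π D * (∑ i, f (D i)) ^ 2 := by
              rw [mul_sum, mul_sum, mul_sum, ← sum_add_distrib, ← sum_add_distrib]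
              exact sum_congr rfl fun D _ => by ring
          _ = _ := by rw [i0, i1, i2]; ring
      simp only [this]
      rw [sum_add_distrib, ← sum_mul, h1]
      push_cast
      ring

theorem second_moment_aux {A : Type} [Fintype A] [DecidableEq A]
    (π : A → ℝ) (hπ : IsDist π) (n : ℕ) (hn : 0 < n) (a : A) :
    ∑ D : Fin n → A, wt1 π D * (empDist D a - π a) ^ 2 ≤ π a / n := by
  have hn' : (0 : ℝ) < n := by exact_mod_cast hn
  have e0 : ∑ b, π b * (if b = a then (1 : ℝ) else 0) = π a := by simp
  have hm := (moments_aux_s17 π (fun b => (if b = a then 1 else 0) - π a) hπ.2 (by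
    simp only [mul_sub, sum_sub_distrib, e0, ← sum_mul, hπ.2]; ring) n).2.2
  have hv : ∑ b, π b * ((if b = a then (1 : ℝ) else 0) - π a) ^ 2 = π a - π a ^ 2 := by
    calc _ = (1 - 2 * π a) * ∑ b, π b * (if b = a then (1 : ℝ) else 0)
          + π a ^ 2 * ∑ b, π b := by
          rw [mul_sum, mul_sum, ← sum_add_distrib]
          exact sum_congr rfl fun D _ => by split_ifs <;> ring
      _ = _ := by rw [e0, hπ.2]; ring
  rw [hv] at hm
  have : ∑ D : Fin n → A, wt1 π D * (empDist D a - π a) ^ 2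
      = (n * (π a - π a ^ 2)) / n ^ 2 := by
    rw [← hm, sum_div]
    refine sum_congr rfl fun D _ => ?_
    have : ∑ i, ((if D i = a then (1 : ℝ) else 0) - π a) = n * (empDist D a - π a) := by
      simp only [sum_sub_distrib, sum_boole, sum_const, card_univ, Fintype.card_fin,
        nsmul_eq_mul, empDist]
      field_simp
    rw [this]
    field_simp
  rw [this, div_le_div_iff₀ (by positivity) hn']
  nlinarith [mul_nonneg (sq_nonneg (π a)) (sq_nonneg (n : ℝ))]

/-- the expected total variation between the empirical distribution
of `n` i.i.d. samples and the truth is at most `(1/2)·√(|A|/n)`. -/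
theorem stmt_17 (A : Type) [Fintype A] [Nonempty A] [DecidableEq A]
    (π : A → ℝ) (hπ : IsDist π) (n : ℕ) (hn : 0 < n) :
    ∑ D : Fin n → A, wt1 π D * tvDist (empDist D) π ≤
      (1 / 2) * Real.sqrt ((Fintype.card A : ℝ) / n) := by
  have hn' : (0 : ℝ) < n := by exact_mod_cast hn
  have hA : (0 : ℝ) < Fintype.card A := by exact_mod_cast Fintype.card_pos
  set s := Real.sqrt ((Fintype.card A : ℝ) / n) with hs
  have hs0 : 0 < s := Real.sqrt_pos.2 (by positivity)
  have hs2 : s ^ 2 = (Fintype.card A : ℝ) / n := Real.sq_sqrt (by positivity)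
  set c := (Fintype.card A : ℝ) with hc
  set t := s / c with ht
  have ht0 : 0 < t := by positivity
  have hw : ∀ D : Fin n → A, 0 ≤ wt1 π D := fun D => prod_nonneg fun i _ => hπ.1 _
  have h1 : ∑ D : Fin n → A, wt1 π D = 1 :=
    (moments_aux_s17 π (fun _ => 0) hπ.2 (by simp) n).1
  have hLHS : ∑ D : Fin n → A, wt1 π D * tvDist (empDist D) π
      = (1 / 2) * ∑ a, ∑ D : Fin n → A, wt1 π D * |empDist D a - π a| := by
    rw [sum_comm, mul_sum]
    refine sum_congr rfl fun D _ => ?_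
    rw [tvDist, ← mul_sum]
    ring
  rw [hLHS]
  have hb : ∀ a, 2 * t * ∑ D : Fin n → A, wt1 π D * |empDist D a - π a|
      ≤ π a / n + t ^ 2 := by
    intro a
    calc _ ≤ ∑ D : Fin n → A, (wt1 π D * (empDist D a - π a) ^ 2 + wt1 π D * t ^ 2) := by
          rw [mul_sum]
          refine sum_le_sum fun D _ => ?_
          have := mul_nonneg (hw D) (sq_nonneg (|empDist D a - π a| - t))
          rw [← sq_abs (empDist D a - π a)]
          linarith
      _ ≤ _ := by
          rw [sum_add_distrib, ← sum_mul, h1, one_mul]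
          linarith [second_moment_aux π hπ n hn a]
  have hsum := sum_le_sum fun a (_ : a ∈ univ) => hb a
  rw [← mul_sum, sum_add_distrib, ← sum_div, hπ.2, sum_const, card_univ, nsmul_eq_mul,
    ← hc] at hsum
  have e : 1 / (n : ℝ) + c * t ^ 2 = 2 * t * s := by
    have : 1 / (n : ℝ) = s ^ 2 / c := by rw [hs2]; field_simp
    rw [this, ht]; field_simp; ring
  rw [e] at hsum
  have := le_of_mul_le_mul_left hsum (by positivity)
  linarith
end
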